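/- Unique continuation for a coupled fourth-order elliptic system: Let U ⊆ ℝ³ be open and connected, and let u, v ∈ C⁴(U). Define e(w) = |∇³w|² + |∇²w|² + |∇w|² + |w|². Suppose there is a constant C > 0 such that pointwise on U one has |Δ²u| ≤ C (e(u) + e(v))^{1/2} and |Δ²v| ≤ C (e(u) + e(v))^{1/2}. If u and v both vanish identically on some nonempty open subset of U, then u = 0 and v = 0 on all of U. -/

import Mathlib

open MeasureTheory Real Set

noncomputable section

/-- `i`-th coordinate unit vector of `ℝ³`. -/
def e3 (i : Fin 3) : EuclideanSpace ℝ (Fin 3) := EuclideanSpace.single i 1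

/-- First partial derivative `∂u/∂x_i` at `x`. -/
def pd (u : EuclideanSpace ℝ (Fin 3) → ℝ) (x : EuclideanSpace ℝ (Fin 3)) (i : Fin 3) : ℝ :=
  fderiv ℝ u x (e3 i)

/-- Second partial derivative `∂²u/∂x_i ∂x_j` at `x`. -/
def pd2 (u : EuclideanSpace ℝ (Fin 3) → ℝ) (x : EuclideanSpace ℝ (Fin 3)) (i j : Fin 3) : ℝ :=
  pd (fun y => pd u y j) x i

/-- Third partial derivative `∂³u/∂x_i ∂x_j ∂x_k` at `x`. -/
def pd3 (u : EuclideanSpace ℝ (Fin 3) → ℝ) (x : EuclideanSpace ℝ (Fin 3)) (i j k : Fin 3) : ℝ :=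
  pd (fun y => pd2 u y j k) x i

/-- The Laplacian `Δu`. -/
def lap (u : EuclideanSpace ℝ (Fin 3) → ℝ) (x : EuclideanSpace ℝ (Fin 3)) : ℝ :=
  ∑ i, pd2 u x i i

/-- The bilaplacian `Δ²u = Δ(Δu)`. -/
def bilap (u : EuclideanSpace ℝ (Fin 3) → ℝ) (x : EuclideanSpace ℝ (Fin 3)) : ℝ :=
  lap (lap u) x

/-- `e(w) = |∇³w|² + |∇²w|² + |∇w|² + |w|²` (Frobenius norms of the arrays of partials). -/
def esum (u : EuclideanSpace ℝ (Fin 3) → ℝ) (x : EuclideanSpace ℝ (Fin 3)) : ℝ :=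
  (∑ i, ∑ j, ∑ k, (pd3 u x i j k) ^ 2) + (∑ i, ∑ j, (pd2 u x i j) ^ 2)
    + (∑ i, (pd u x i) ^ 2) + (u x) ^ 2

/-!
Conjugating the Laplacian by the weight `exp (t s²)`, `s = R - ‖x - q‖²`, gives a symmetric operator
plus a transport term along the rays from `q`. On a thin spherical shell their product integrates
to a positive quadratic form, which is a Carleman estimate for the Laplacian. Applied to `f` and
to `Δf`, and combined with two integrations by parts for the derivatives of order two and three, it
bounds all derivatives of order at most three by `Δ²f`, with a constant that is proportional to the
square of the width of the shell and does not depend on `t`. On a sufficiently thin shell the terms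
`C e(u)` coming from the differential inequality are therefore absorbed. The error of the cutoff
lives in the outer half of the shell, where the weight is exponentially smaller than in the inner
half, so letting `t → ∞` shows that a ball on which the solution vanishes can always be enlarged
slightly.
-/

namespace BilaplacianCarleman

open Filter Topology Gradient
open scoped InnerProductSpace

section Hilbert

variable {F : Type*} [NormedAddCommGroup F]
  {f : F → ℝ} {q x : F} {m n : WithTop ℕ∞}

/-- The gap `s = R - ‖x - q‖²`; the Carleman weight is `exp (t s²)`. -/
def gap (R : ℝ) (q x : F) : ℝ :=
  R - ‖x - q‖ ^ 2

variable [InnerProductSpace ℝ F]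

/-- The derivative `(x - q) · ∇f(x)` along the Euler vector field centred at `q`. -/
def radialDeriv (q : F) (f : F → ℝ) (x : F) : ℝ :=
  fderiv ℝ f x (x - q)

lemma contDiff_radialDeriv (hf : ContDiff ℝ n f) (hmn : m + 1 ≤ n) :
    ContDiff ℝ m (radialDeriv q f) :=
  (hf.fderiv_right hmn).clm_apply (contDiff_id.sub contDiff_const)

lemma differentiable_fderiv (hf : ContDiff ℝ 2 f) : Differentiable ℝ (fderiv ℝ f) :=
  (hf.fderiv_right (m := 1) le_rfl).differentiable one_ne_zero

lemma fderiv_fderiv_comm (hf : ContDiff ℝ 2 f) (x a b : F) :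
    fderiv ℝ (fderiv ℝ f) x a b = fderiv ℝ (fderiv ℝ f) x b a :=
  (hf.contDiffAt.isSymmSndFDerivAt (by simp)).eq a b

lemma fderiv_radialDeriv (hf : ContDiff ℝ 2 f) (q x v : F) :
    fderiv ℝ (radialDeriv q f) x v
      = fderiv ℝ (fderiv ℝ f) x v (x - q) + fderiv ℝ f x v := by
  change fderiv ℝ (fun y => fderiv ℝ f y (y - q)) x v = _
  rw [fderiv_clm_apply (differentiable_fderiv hf x) (by fun_prop)]
  simp [fderiv_sub_const, add_comm]

lemma hasFDerivAt_norm_sub_sq (q x : F) :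
    HasFDerivAt (fun y => ‖y - q‖ ^ 2) ((2 : ℝ) • innerSL ℝ (x - q)) x := by
  have hsq : HasFDerivAt (fun y => ‖y - q‖ ^ 2) _ x := ((hasFDerivAt_id x).sub_const q).norm_sq
  refine hsq.congr_fderiv ?_
  ext v
  simp [two_mul]

lemma contDiff_gap (R : ℝ) (q : F) : ContDiff ℝ n (gap R q) :=
  contDiff_const.sub ((contDiff_id.sub contDiff_const).norm_sq ℝ)

lemma hasFDerivAt_gap (R : ℝ) (q x : F) :
    HasFDerivAt (gap R q) (-((2 : ℝ) • innerSL ℝ (x - q))) x :=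
  (hasFDerivAt_norm_sub_sq q x).const_sub R

variable [CompleteSpace F]

lemma contDiff_gradient (hf : ContDiff ℝ n f) (hmn : m + 1 ≤ n) : ContDiff ℝ m (∇ f) :=
  (InnerProductSpace.toDual ℝ F).symm.contDiff.comp (hf.fderiv_right hmn)

lemma fderiv_norm_gradient_sq (hf : ContDiff ℝ 2 f) (x v : F) :
    fderiv ℝ (fun y => ‖∇ f y‖ ^ 2) x v = 2 * fderiv ℝ (fderiv ℝ f) x v (∇ f x) := by
  have hgrad : HasFDerivAt (∇ f) _ x :=
    (InnerProductSpace.toDual ℝ F).symm.toContinuousLinearEquiv.hasFDerivAt.comp x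
      (differentiable_fderiv hf x).hasFDerivAt
  rw [hgrad.norm_sq.fderiv]
  simp [-inner_gradient_left, -inner_gradient_right, real_inner_comm _ (∇ f x)]

end Hilbert

section Partial

variable {ι : Type*} [Fintype ι] [DecidableEq ι] {f g w h : EuclideanSpace ℝ ι → ℝ}
  {x : EuclideanSpace ℝ ι} {m n : WithTop ℕ∞}

/-- The partial derivative `∂ᵢf`. -/
def partialDeriv (i : ι) (f : EuclideanSpace ℝ ι → ℝ) (x : EuclideanSpace ℝ ι) : ℝ :=
  fderiv ℝ f x (EuclideanSpace.single i 1)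

/-- The Laplacian as a sum of iterated partial derivatives. Unlike Mathlib's `Δ`, it is unfolded
by the coordinate formulas of the statement even where `f` is not `C²`. -/
def laplacian (f : EuclideanSpace ℝ ι → ℝ) (x : EuclideanSpace ℝ ι) : ℝ :=
  ∑ i, partialDeriv i (partialDeriv i f) x

/-- The squared Frobenius norm `|∇²f|²` of the Hessian, column by column. -/
def hessSq (f : EuclideanSpace ℝ ι → ℝ) (x : EuclideanSpace ℝ ι) : ℝ :=
  ∑ j, ‖∇ (partialDeriv j f) x‖ ^ 2

/-- The energy density `e(f) = |∇³f|² + |∇²f|² + |∇f|² + |f|²` of the third-order jet. -/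
def jetSq (f : EuclideanSpace ℝ ι → ℝ) (x : EuclideanSpace ℝ ι) : ℝ :=
  (∑ k, hessSq (partialDeriv k f) x) + hessSq f x + ‖∇ f x‖ ^ 2 + f x ^ 2

lemma fderiv_apply_eq_sum (f : EuclideanSpace ℝ ι → ℝ) (x v : EuclideanSpace ℝ ι) :
    fderiv ℝ f x v = ∑ i, v i * partialDeriv i f x := by
  conv_lhs => rw [← (EuclideanSpace.basisFun ι ℝ).sum_repr v]
  simp [partialDeriv]

lemma gradient_apply (f : EuclideanSpace ℝ ι → ℝ) (x : EuclideanSpace ℝ ι) (i : ι) :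
    ∇ f x i = partialDeriv i f x := by
  rw [partialDeriv, ← inner_gradient_left, EuclideanSpace.inner_single_right]
  simp

lemma norm_gradient_sq (f : EuclideanSpace ℝ ι → ℝ) (x : EuclideanSpace ℝ ι) :
    ‖∇ f x‖ ^ 2 = ∑ i, partialDeriv i f x ^ 2 := by
  simp [EuclideanSpace.norm_sq_eq, gradient_apply]

lemma fderiv_apply_gradient (f g : EuclideanSpace ℝ ι → ℝ) (x : EuclideanSpace ℝ ι) :
    fderiv ℝ f x (∇ g x) = ∑ i, partialDeriv i f x * partialDeriv i g x := by
  simp [fderiv_apply_eq_sum, gradient_apply, mul_comm]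

lemma contDiff_partialDeriv (hf : ContDiff ℝ n f) (hmn : m + 1 ≤ n) (i : ι) :
    ContDiff ℝ m (partialDeriv i f) :=
  (hf.fderiv_right hmn).clm_apply contDiff_const

lemma contDiff_laplacian (hf : ContDiff ℝ n f) (hmn : m + 2 ≤ n) : ContDiff ℝ m (laplacian f) := by
  have hmn' : m + 1 + 1 ≤ n := by rwa [add_assoc, one_add_one_eq_two]
  exact ContDiff.sum fun i _ =>
    contDiff_partialDeriv (contDiff_partialDeriv hf hmn' i) le_rfl i

lemma partialDeriv_comm (hf : ContDiff ℝ 2 f) (i j : ι) :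
    partialDeriv i (partialDeriv j f) = partialDeriv j (partialDeriv i f) := by
  have hsnd (a b : ι) (x : EuclideanSpace ℝ ι) : partialDeriv a (partialDeriv b f) x
      = fderiv ℝ (fderiv ℝ f) x (EuclideanSpace.single a 1) (EuclideanSpace.single b 1) := by
    change fderiv ℝ (fun y => fderiv ℝ f y (EuclideanSpace.single b 1)) x _ = _
    rw [fderiv_clm_apply (differentiable_fderiv hf x) (by fun_prop)]
    simp
  ext x
  rw [hsnd, hsnd, fderiv_fderiv_comm hf]

lemma partialDeriv_laplacian (hf : ContDiff ℝ 3 f) (j : ι) :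
    partialDeriv j (laplacian f) = laplacian (partialDeriv j f) := by
  have hf' (i : ι) : ContDiff ℝ 2 (partialDeriv i f) := contDiff_partialDeriv hf le_rfl i
  have hf'' (i : ι) : Differentiable ℝ (partialDeriv i (partialDeriv i f)) :=
    (contDiff_partialDeriv (m := 1) (hf' i) le_rfl i).differentiable one_ne_zero
  ext x
  calc partialDeriv j (laplacian f) x
      = ∑ i, partialDeriv j (partialDeriv i (partialDeriv i f)) x := by
        change fderiv ℝ (fun y => ∑ i, partialDeriv i (partialDeriv i f) y) x _ = _
        rw [fderiv_fun_sum fun i _ => hf'' i x]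
        simp [partialDeriv]
    _ = laplacian (partialDeriv j f) x := Finset.sum_congr rfl fun i _ => by
        rw [partialDeriv_comm (hf' i), partialDeriv_comm (hf.of_le (by norm_num)) j i]

lemma partialDeriv_add (hf : DifferentiableAt ℝ f x) (hg : DifferentiableAt ℝ g x) (i : ι) :
    partialDeriv i (fun y => f y + g y) x = partialDeriv i f x + partialDeriv i g x := by
  simp [partialDeriv, fderiv_fun_add hf hg]

lemma partialDeriv_mul (hf : DifferentiableAt ℝ f x) (hg : DifferentiableAt ℝ g x) (i : ι) :
    partialDeriv i (fun y => f y * g y) x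
      = f x * partialDeriv i g x + g x * partialDeriv i f x := by
  simp [partialDeriv, fderiv_fun_mul hf hg]

lemma laplacian_mul (hf : ContDiff ℝ 2 f) (hg : ContDiff ℝ 2 g) (x : EuclideanSpace ℝ ι) :
    laplacian (fun y => f y * g y) x
      = f x * laplacian g x + 2 * fderiv ℝ g x (∇ f x) + g x * laplacian f x := by
  have hd {u : EuclideanSpace ℝ ι → ℝ} (hu : ContDiff ℝ 2 u) : Differentiable ℝ u :=
    hu.differentiable two_ne_zero
  have hd' {u : EuclideanSpace ℝ ι → ℝ} (hu : ContDiff ℝ 2 u) (i : ι) :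
      Differentiable ℝ (partialDeriv i u) :=
    (contDiff_partialDeriv (m := 1) hu le_rfl i).differentiable one_ne_zero
  have hfst (i : ι) : partialDeriv i (fun y => f y * g y)
      = fun y => f y * partialDeriv i g y + g y * partialDeriv i f y :=
    funext fun y => partialDeriv_mul (hd hf y) (hd hg y) i
  have hsnd (i : ι) : partialDeriv i (partialDeriv i (fun y => f y * g y)) x
      = f x * partialDeriv i (partialDeriv i g) x
        + 2 * (partialDeriv i g x * partialDeriv i f x)
        + g x * partialDeriv i (partialDeriv i f) x := by
    rw [hfst, partialDeriv_add ((hd hf x).fun_mul (hd' hg i x)) ((hd hg x).fun_mul (hd' hf i x)),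
      partialDeriv_mul (hd hf x) (hd' hg i x), partialDeriv_mul (hd hg x) (hd' hf i x)]
    ring
  simp only [laplacian, hsnd, Finset.sum_add_distrib, Finset.mul_sum, fderiv_apply_gradient]

end Partial

section Carleman

variable {ι : Type*} [Fintype ι] {t R : ℝ} {q x : EuclideanSpace ℝ ι}
  {w : EuclideanSpace ℝ ι → ℝ}

/-- The potential `V` in the decomposition of `exp (t s²) Δ exp (-t s²)`, where `s = R - ‖x - q‖²`,
into the symmetric operator `Δ + V` and the first-order operator `carlemanTransport`. The terms of
order zero are divided between the two so that `carlemanForm` is positive on thin shells. -/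
def carlemanPotential (t R : ℝ) (q x : EuclideanSpace ℝ ι) : ℝ :=
  16 * t ^ 2 * gap R q x ^ 2 * ‖x - q‖ ^ 2 + 4 * Fintype.card ι * t * gap R q x
    + 8 * t * ‖x - q‖ ^ 2

/-- The first-order part of `exp (t s²) Δ exp (-t s²)`, complementary to `carlemanSymm`. -/
def carlemanTransport (t R : ℝ) (q : EuclideanSpace ℝ ι) (w : EuclideanSpace ℝ ι → ℝ)
    (x : EuclideanSpace ℝ ι) : ℝ :=
  8 * t * gap R q x * radialDeriv q w x - 16 * t * ‖x - q‖ ^ 2 * w x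

/-- The coefficient of the vector field `x - q` in the divergence term of the multiplier identity
`carlemanSymm_mul_carlemanTransport`. -/
def carlemanFlux (t R : ℝ) (q : EuclideanSpace ℝ ι) (w : EuclideanSpace ℝ ι → ℝ)
    (x : EuclideanSpace ℝ ι) : ℝ :=
  -4 * t * gap R q x * ‖∇ w x‖ ^ 2 + 16 * t * w x ^ 2
    + 4 * t * carlemanPotential t R q x * gap R q x * w x ^ 2

lemma fderiv_apply_gradient_self {F : Type*} [NormedAddCommGroup F] [InnerProductSpace ℝ F]
    [CompleteSpace F] (f : F → ℝ) (x : F) : fderiv ℝ f x (∇ f x) = ‖∇ f x‖ ^ 2 := by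
  rw [← inner_gradient_left, real_inner_self_eq_norm_sq]

lemma fderiv_carlemanTransport (hw : ContDiff ℝ 2 w) (t R : ℝ) (q x v : EuclideanSpace ℝ ι) :
    fderiv ℝ (carlemanTransport t R q w) x v
      = 8 * t * gap R q x * (fderiv ℝ (fderiv ℝ w) x v (x - q) + fderiv ℝ w x v)
        - 16 * t * ‖x - q‖ ^ 2 * fderiv ℝ w x v
        - 16 * t * ⟪x - q, v⟫_ℝ * (radialDeriv q w x + 2 * w x) := by
  have hw' := (hw.differentiable two_ne_zero x).hasFDerivAt
  have hE := ((contDiff_radialDeriv (q := q) (m := 1) hw le_rfl).differentiable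
    one_ne_zero x).hasFDerivAt
  have hA : HasFDerivAt (carlemanTransport t R q w) _ x :=
    (((hasFDerivAt_gap R q x).const_mul (8 * t)).mul hE).sub
      (((hasFDerivAt_norm_sub_sq q x).const_mul (16 * t)).mul hw')
  rw [hA.fderiv]
  simp only [sub_apply, add_apply, neg_apply, smul_apply, smul_eq_mul, innerSL_apply_apply,
    fderiv_radialDeriv hw]
  ring

lemma radialDeriv_carlemanFlux (hw : ContDiff ℝ 2 w) (t R : ℝ) (q x : EuclideanSpace ℝ ι) :
    radialDeriv q (carlemanFlux t R q w) x
      = -8 * t * gap R q x * fderiv ℝ (fderiv ℝ w) x (x - q) (∇ w x)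
        + 8 * t * ‖x - q‖ ^ 2 * ‖∇ w x‖ ^ 2
        + (32 * t + 8 * t * carlemanPotential t R q x * gap R q x) * w x * radialDeriv q w x
        + (128 * t ^ 3 * gap R q x ^ 3 * ‖x - q‖ ^ 2
          - 256 * t ^ 3 * gap R q x ^ 2 * (‖x - q‖ ^ 2) ^ 2
          - 32 * Fintype.card ι * t ^ 2 * gap R q x * ‖x - q‖ ^ 2
          + 64 * t ^ 2 * gap R q x * ‖x - q‖ ^ 2
          - 8 * t * ‖x - q‖ ^ 2 * carlemanPotential t R q x) * w x ^ 2 := by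
  have hs := hasFDerivAt_gap R q x
  have hρ := hasFDerivAt_norm_sub_sq q x
  have hw' := (hw.differentiable two_ne_zero x).hasFDerivAt
  have hG := (((contDiff_gradient (m := 1) hw le_rfl).norm_sq ℝ).differentiable
    one_ne_zero x).hasFDerivAt
  have hm : HasFDerivAt (carlemanPotential t R q) _ x :=
    ((((hs.pow 2).const_mul (16 * t ^ 2)).mul hρ).add
      (hs.const_mul (4 * Fintype.card ι * t))).add (hρ.const_mul (8 * t))
  have hk : HasFDerivAt (carlemanFlux t R q w) _ x :=
    (((hs.const_mul (-4 * t)).mul hG).add ((hw'.pow 2).const_mul (16 * t))).add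
      (((hm.const_mul (4 * t)).mul hs).mul (hw'.pow 2))
  rw [radialDeriv, hk.fderiv]
  simp only [add_apply, neg_apply, smul_apply, smul_eq_mul, nsmul_eq_mul, innerSL_apply_apply,
    fderiv_norm_gradient_sq hw, real_inner_self_eq_norm_sq, Pi.mul_apply, ← radialDeriv.eq_1]
  push_cast
  ring

/-- The coefficient of `w²` in `carlemanForm`. -/
def carlemanCoeff (t R : ℝ) (q x : EuclideanSpace ℝ ι) : ℝ :=
  64 * t ^ 3 * gap R q x ^ 2 * ‖x - q‖ ^ 2 * (2 * ‖x - q‖ ^ 2 - (Fintype.card ι + 2) * gap R q x)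
    - t ^ 2 * (64 * (‖x - q‖ ^ 2) ^ 2 + 32 * (Fintype.card ι + 2) * gap R q x * ‖x - q‖ ^ 2
      + 16 * Fintype.card ι ^ 2 * gap R q x ^ 2)
    - 16 * Fintype.card ι * t

/-- The quadratic form in `(w, ∇w)` that remains of the product of `carlemanSymm` and
`carlemanTransport` once divergences are discarded. -/
def carlemanForm (t R : ℝ) (q : EuclideanSpace ℝ ι) (w : EuclideanSpace ℝ ι → ℝ)
    (x : EuclideanSpace ℝ ι) : ℝ :=
  16 * t * radialDeriv q w x ^ 2
    + (4 * (Fintype.card ι - 2) * t * gap R q x + 8 * t * ‖x - q‖ ^ 2) * ‖∇ w x‖ ^ 2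
    + carlemanCoeff t R q x * w x ^ 2

variable [DecidableEq ι]

/-- The symmetric operator `Δ + V` with `V = carlemanPotential`, the second-order part of
`exp (t s²) Δ exp (-t s²)`. -/
def carlemanSymm (t R : ℝ) (q : EuclideanSpace ℝ ι) (w : EuclideanSpace ℝ ι → ℝ)
    (x : EuclideanSpace ℝ ι) : ℝ :=
  laplacian w x + carlemanPotential t R q x * w x

lemma carlemanSymm_mul_carlemanTransport (hw : ContDiff ℝ 2 w) (t R : ℝ)
    (q x : EuclideanSpace ℝ ι) :
    carlemanSymm t R q w x * carlemanTransport t R q w x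
      = carlemanForm t R q w x
        + (laplacian w x * carlemanTransport t R q w x
          + fderiv ℝ (carlemanTransport t R q w) x (∇ w x))
        + (radialDeriv q (carlemanFlux t R q w) x
          + Fintype.card ι * carlemanFlux t R q w x) := by
  have hrad : ⟪x - q, ∇ w x⟫_ℝ = radialDeriv q w x := inner_gradient_right
  rw [fderiv_carlemanTransport hw, radialDeriv_carlemanFlux hw, fderiv_apply_gradient_self, hrad,
    fderiv_fderiv_comm hw x (x - q)]
  simp only [carlemanSymm, carlemanForm, carlemanTransport, carlemanFlux, carlemanPotential,
    carlemanCoeff]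
  ring

end Carleman

section Support

variable {ι : Type*} [DecidableEq ι] {f w h k : EuclideanSpace ℝ ι → ℝ}
  {q x : EuclideanSpace ℝ ι}

lemma tsupport_partialDeriv_subset (f : EuclideanSpace ℝ ι → ℝ) (i : ι) :
    tsupport (partialDeriv i f) ⊆ tsupport f :=
  tsupport_fderiv_apply_subset ℝ _

lemma gradient_of_notMem_tsupport {F : Type*} [NormedAddCommGroup F] [InnerProductSpace ℝ F]
    [CompleteSpace F] {f : F → ℝ} {x : F} (hx : x ∉ tsupport f) : ∇ f x = 0 := by
  simp [gradient, fderiv_of_notMem_tsupport ℝ hx]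

lemma partialDeriv_of_notMem_tsupport (hx : x ∉ tsupport f) (i : ι) : partialDeriv i f x = 0 := by
  simp [partialDeriv, fderiv_of_notMem_tsupport ℝ hx]

variable [Fintype ι]

lemma laplacian_of_notMem_tsupport (hx : x ∉ tsupport f) : laplacian f x = 0 :=
  Finset.sum_eq_zero fun i _ =>
    partialDeriv_of_notMem_tsupport (fun h => hx (tsupport_partialDeriv_subset f i h)) i

lemma tsupport_laplacian_subset (f : EuclideanSpace ℝ ι → ℝ) :
    tsupport (laplacian f) ⊆ tsupport f :=
  closure_minimal (fun _ hx => not_imp_comm.1 laplacian_of_notMem_tsupport hx)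
    (isClosed_tsupport f)

lemma hessSq_of_notMem_tsupport (hx : x ∉ tsupport f) : hessSq f x = 0 :=
  Finset.sum_eq_zero fun j _ => by
    simp [gradient_of_notMem_tsupport fun h => hx (tsupport_partialDeriv_subset f j h)]

lemma continuous_hessSq (hf : ContDiff ℝ 2 f) : Continuous (hessSq f) :=
  continuous_finsetSum _ fun j _ =>
    ((contDiff_gradient (m := 0) (contDiff_partialDeriv (m := 1) hf le_rfl j)
      le_rfl).continuous.norm).pow 2

lemma jetSq_of_notMem_tsupport (hx : x ∉ tsupport f) : jetSq f x = 0 := by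
  have hthird (k : ι) : hessSq (partialDeriv k f) x = 0 :=
    hessSq_of_notMem_tsupport fun h => hx (tsupport_partialDeriv_subset f k h)
  simp [jetSq, hthird, hessSq_of_notMem_tsupport hx, gradient_of_notMem_tsupport hx,
    image_eq_zero_of_notMem_tsupport hx]

lemma continuous_jetSq (hf : ContDiff ℝ 3 f) : Continuous (jetSq f) := by
  have hgrad : Continuous (∇ f) := (contDiff_gradient (m := 0) hf (by simp)).continuous
  have hthird : Continuous fun x => ∑ k, hessSq (partialDeriv k f) x :=
    continuous_finsetSum _ fun k _ => continuous_hessSq (contDiff_partialDeriv hf le_rfl k)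
  exact ((hthird.add (continuous_hessSq (hf.of_le (by norm_num)))).add (hgrad.norm.pow 2)).add
    (hf.continuous.pow 2)

lemma integral_partialDeriv_eq_zero (hf : ContDiff ℝ 1 f) (hc : HasCompactSupport f) (i : ι) :
    ∫ x, partialDeriv i f x = 0 := by
  have hint : Integrable (partialDeriv i f) :=
    (contDiff_partialDeriv (m := 0) hf le_rfl i).continuous.integrable_of_hasCompactSupport
      (hc.fderiv_apply ℝ _)
  simpa [partialDeriv] using integral_mul_fderiv_eq_neg_fderiv_mul_of_integrable
    (μ := volume) (f := fun _ => (1 : ℝ)) (v := EuclideanSpace.single i 1) (by simp)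
    (by simp only [one_mul]; exact hint)
    (by simpa using hf.continuous.integrable_of_hasCompactSupport hc) (by simp)
    (fun x _ => hf.differentiable one_ne_zero x)

lemma integral_sum_partialDeriv_eq_zero {X : ι → EuclideanSpace ℝ ι → ℝ}
    (hX : ∀ i, ContDiff ℝ 1 (X i)) (hc : ∀ i, HasCompactSupport (X i)) :
    ∫ x, ∑ i, partialDeriv i (X i) x = 0 := by
  rw [integral_finsetSum _ fun i _ =>
    (contDiff_partialDeriv (m := 0) (hX i) le_rfl i).continuous.integrable_of_hasCompactSupport
      ((hc i).fderiv_apply ℝ _)]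
  exact Finset.sum_eq_zero fun i _ => integral_partialDeriv_eq_zero (hX i) (hc i) i

lemma integral_laplacian_mul_add_fderiv_gradient (hw : ContDiff ℝ 2 w) (hc : HasCompactSupport w)
    (hh : ContDiff ℝ 1 h) :
    ∫ x, (laplacian w x * h x + fderiv ℝ h x (∇ w x)) = 0 := by
  have hw' (i : ι) : ContDiff ℝ 1 (partialDeriv i w) := contDiff_partialDeriv hw le_rfl i
  rw [← integral_sum_partialDeriv_eq_zero (X := fun i x => h x * partialDeriv i w x)
    (fun i => hh.mul (hw' i)) fun i => (hc.fderiv_apply ℝ _).mul_left]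
  congr 1 with x
  simp only [partialDeriv_mul (hh.differentiable one_ne_zero x)
    ((hw' _).differentiable one_ne_zero x), laplacian, fderiv_apply_gradient,
    Finset.sum_add_distrib, Finset.mul_sum, mul_comm]

omit [DecidableEq ι] in
lemma hasFDerivAt_coord_sub (q x : EuclideanSpace ℝ ι) (i : ι) :
    HasFDerivAt (fun y : EuclideanSpace ℝ ι => (y - q) i)
      (EuclideanSpace.proj i : EuclideanSpace ℝ ι →L[ℝ] ℝ) x :=
  (EuclideanSpace.proj i : EuclideanSpace ℝ ι →L[ℝ] ℝ).hasFDerivAt.comp x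
    ((hasFDerivAt_id x).sub_const q)

lemma partialDeriv_coord_sub (q x : EuclideanSpace ℝ ι) (i : ι) :
    partialDeriv i (fun y => (y - q) i) x = 1 := by
  rw [partialDeriv, (hasFDerivAt_coord_sub q x i).fderiv]
  simp

omit [DecidableEq ι] in
lemma integral_radialDeriv_add (hk : ContDiff ℝ 1 k) (hc : HasCompactSupport k)
    (q : EuclideanSpace ℝ ι) :
    ∫ x, (radialDeriv q k x + Fintype.card ι * k x) = 0 := by
  classical
  have hcoord (i : ι) : ContDiff ℝ 1 fun x : EuclideanSpace ℝ ι => (x - q) i := by fun_prop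
  rw [← integral_sum_partialDeriv_eq_zero (X := fun i x => (x - q) i * k x)
    (fun i => (hcoord i).mul hk) fun i => hc.mul_left]
  congr 1 with x
  simp only [partialDeriv_mul ((hcoord _).differentiable one_ne_zero x)
    (hk.differentiable one_ne_zero x), partialDeriv_coord_sub, radialDeriv, fderiv_apply_eq_sum k x,
    Finset.sum_add_distrib, mul_one, Finset.sum_const, Finset.card_univ, nsmul_eq_mul]

end Support

section Weight

variable {F : Type*} [NormedAddCommGroup F]

/-- The Carleman weight `exp (t s²)`, where `s = R - ‖x - q‖²`. -/
def carlemanWeight (t R : ℝ) (q x : F) : ℝ :=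
  exp (t * gap R q x ^ 2)

variable [InnerProductSpace ℝ F]

lemma contDiff_carlemanWeight (t R : ℝ) (q : F) {n : WithTop ℕ∞} :
    ContDiff ℝ n (carlemanWeight t R q) :=
  (contDiff_const.mul ((contDiff_gap R q).pow 2)).exp

lemma fderiv_carlemanWeight (t R : ℝ) (q x v : F) :
    fderiv ℝ (carlemanWeight t R q) x v
      = -4 * t * gap R q x * carlemanWeight t R q x * ⟪x - q, v⟫_ℝ := by
  have hweight : HasFDerivAt (carlemanWeight t R q) _ x :=
    (((hasFDerivAt_gap R q x).pow 2).const_mul t).exp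
  rw [hweight.fderiv]
  simp only [carlemanWeight, neg_apply, smul_apply, smul_eq_mul, nsmul_eq_mul, innerSL_apply_apply]
  push_cast
  ring

lemma gradient_carlemanWeight [CompleteSpace F] (t R : ℝ) (q x : F) :
    ∇ (carlemanWeight t R q) x
      = (-4 * t * gap R q x * carlemanWeight t R q x) • (x - q) := by
  refine ext_inner_right ℝ fun v => ?_
  rw [inner_gradient_left, fderiv_carlemanWeight, real_inner_smul_left]

end Weight

section Conjugation

variable {ι : Type*} [Fintype ι] {f : EuclideanSpace ℝ ι → ℝ}

lemma carlemanWeight_smul_gradient (hf : ContDiff ℝ 1 f) (t R : ℝ) (q x : EuclideanSpace ℝ ι) :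
    carlemanWeight t R q x • ∇ f x
      = ∇ (fun y => carlemanWeight t R q y * f y) x
        + (4 * t * gap R q x * (carlemanWeight t R q x * f x)) • (x - q) := by
  refine ext_inner_right ℝ fun v => ?_
  simp only [inner_add_left, real_inner_smul_left, inner_gradient_left]
  rw [fderiv_fun_mul ((contDiff_carlemanWeight t R q).differentiable two_ne_zero x)
      (hf.differentiable one_ne_zero x)]
  simp only [add_apply, smul_apply, smul_eq_mul, fderiv_carlemanWeight]
  ring

lemma sq_carlemanWeight_mul_norm_gradient_le (hf : ContDiff ℝ 1 f) (t R : ℝ)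
    (q x : EuclideanSpace ℝ ι) :
    carlemanWeight t R q x ^ 2 * ‖∇ f x‖ ^ 2
      ≤ 2 * ‖∇ (fun y => carlemanWeight t R q y * f y) x‖ ^ 2
        + 32 * t ^ 2 * gap R q x ^ 2 * ‖x - q‖ ^ 2 * (carlemanWeight t R q x * f x) ^ 2 := by
  set c := 4 * t * gap R q x * (carlemanWeight t R q x * f x) with hc
  calc carlemanWeight t R q x ^ 2 * ‖∇ f x‖ ^ 2
      = ‖∇ (fun y => carlemanWeight t R q y * f y) x + c • (x - q)‖ ^ 2 := by
        rw [hc, ← carlemanWeight_smul_gradient hf, norm_smul, mul_pow, norm_eq_abs, sq_abs]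
    _ ≤ (‖∇ (fun y => carlemanWeight t R q y * f y) x‖ + ‖c • (x - q)‖) ^ 2 := by
        gcongr
        exact norm_add_le _ _
    _ ≤ 2 * (‖∇ (fun y => carlemanWeight t R q y * f y) x‖ ^ 2 + ‖c • (x - q)‖ ^ 2) := add_sq_le
    _ = _ := by
        rw [norm_smul, mul_pow, norm_eq_abs, sq_abs]
        ring

variable [DecidableEq ι]

lemma laplacian_carlemanWeight (t R : ℝ) (q x : EuclideanSpace ℝ ι) :
    laplacian (carlemanWeight t R q) x
      = (16 * t ^ 2 * gap R q x ^ 2 * ‖x - q‖ ^ 2 + 8 * t * ‖x - q‖ ^ 2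
        - 4 * Fintype.card ι * t * gap R q x) * carlemanWeight t R q x := by
  have hfst (i : ι) : partialDeriv i (carlemanWeight t R q)
      = fun y => -4 * t * gap R q y * (carlemanWeight t R q y * (y - q) i) := by
    ext y
    rw [partialDeriv, fderiv_carlemanWeight, EuclideanSpace.inner_single_right]
    simp [mul_assoc]
  have hsnd (i : ι) : partialDeriv i (partialDeriv i (carlemanWeight t R q)) x
      = (16 * t ^ 2 * gap R q x ^ 2 + 8 * t) * carlemanWeight t R q x * (x - q) i ^ 2
        - 4 * t * gap R q x * carlemanWeight t R q x := by
    have hweight := ((contDiff_carlemanWeight t R q).differentiable two_ne_zero x).hasFDerivAt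
    have hd : HasFDerivAt
        (fun y => -4 * t * gap R q y * (carlemanWeight t R q y * (y - q) i)) _ x :=
      ((hasFDerivAt_gap R q x).const_mul (-4 * t)).mul (hweight.mul (hasFDerivAt_coord_sub q x i))
    rw [hfst, partialDeriv, hd.fderiv]
    simp only [add_apply, neg_apply, smul_apply, smul_eq_mul, innerSL_apply_apply,
      fderiv_carlemanWeight, EuclideanSpace.inner_single_right, PiLp.proj_apply,
      PiLp.single_apply, if_true, conj_trivial]
    ring
  simp only [laplacian, hsnd, Finset.sum_sub_distrib, ← Finset.mul_sum, Finset.sum_const,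
    Finset.card_univ, nsmul_eq_mul, ← EuclideanSpace.real_norm_sq_eq]
  ring

lemma carlemanWeight_mul_laplacian (hf : ContDiff ℝ 2 f) (t R : ℝ) (q x : EuclideanSpace ℝ ι) :
    carlemanWeight t R q x * laplacian f x
      = carlemanSymm t R q (fun y => carlemanWeight t R q y * f y) x
        + carlemanTransport t R q (fun y => carlemanWeight t R q y * f y) x := by
  have hg : ContDiff ℝ 2 (carlemanWeight t R q) := contDiff_carlemanWeight t R q
  have hrad : radialDeriv q (fun y => carlemanWeight t R q y * f y) x
      = carlemanWeight t R q x * radialDeriv q f x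
        - 4 * t * gap R q x * carlemanWeight t R q x * ‖x - q‖ ^ 2 * f x := by
    rw [radialDeriv, fderiv_fun_mul (hg.differentiable two_ne_zero x)
      (hf.differentiable two_ne_zero x), add_apply, smul_apply, smul_apply, smul_eq_mul,
      smul_eq_mul, fderiv_carlemanWeight, real_inner_self_eq_norm_sq, ← radialDeriv]
    ring
  rw [carlemanSymm, carlemanTransport, carlemanPotential, laplacian_mul hg hf, hrad,
    gradient_carlemanWeight, laplacian_carlemanWeight, map_smul, smul_eq_mul, ← radialDeriv]
  ring

end Conjugation

section Estimate

lemma integrable_of_notMem_tsupport {X : Type*} [TopologicalSpace X] [R1Space X]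
    [MeasurableSpace X] [OpensMeasurableSpace X] {f F : X → ℝ} {μ : Measure X}
    [IsFiniteMeasureOnCompacts μ] (hc : HasCompactSupport f) (hF : Continuous F)
    (hzero : ∀ x, x ∉ tsupport f → F x = 0) : Integrable F μ :=
  hF.integrable_of_hasCompactSupport (HasCompactSupport.intro hc hzero)

variable {ι : Type*} [Fintype ι] {f w : EuclideanSpace ℝ ι → ℝ}
  {e a t R : ℝ} {q x : EuclideanSpace ℝ ι}

lemma contDiff_carlemanPotential (t R : ℝ) (q : EuclideanSpace ℝ ι) {n : WithTop ℕ∞} :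
    ContDiff ℝ n (carlemanPotential t R q) := by
  have hs : ContDiff ℝ n (gap R q) := contDiff_gap R q
  have hρ : ContDiff ℝ n fun x => ‖x - q‖ ^ 2 := (contDiff_id.sub contDiff_const).norm_sq ℝ
  exact (((contDiff_const.mul (hs.pow 2)).mul hρ).add (contDiff_const.mul hs)).add
    (contDiff_const.mul hρ)

lemma contDiff_carlemanTransport (hw : ContDiff ℝ 2 w) (t R : ℝ) (q : EuclideanSpace ℝ ι) :
    ContDiff ℝ 1 (carlemanTransport t R q w) := by
  have hs : ContDiff ℝ 1 (gap R q) := contDiff_gap R q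
  have hE : ContDiff ℝ 1 (radialDeriv q w) := contDiff_radialDeriv hw le_rfl
  have hw' : ContDiff ℝ 1 w := hw.of_le one_le_two
  have hρ : ContDiff ℝ 1 fun x => ‖x - q‖ ^ 2 := (contDiff_id.sub contDiff_const).norm_sq ℝ
  exact ((contDiff_const.mul hs).mul hE).sub ((contDiff_const.mul hρ).mul hw')

lemma contDiff_carlemanFlux (hw : ContDiff ℝ 2 w) (t R : ℝ) (q : EuclideanSpace ℝ ι) :
    ContDiff ℝ 1 (carlemanFlux t R q w) := by
  have hs : ContDiff ℝ 1 (gap R q) := contDiff_gap R q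
  have hm : ContDiff ℝ 1 (carlemanPotential t R q) := contDiff_carlemanPotential t R q
  have hG : ContDiff ℝ 1 fun x => ‖∇ w x‖ ^ 2 := (contDiff_gradient hw le_rfl).norm_sq ℝ
  have hw' : ContDiff ℝ 1 w := hw.of_le one_le_two
  exact (((contDiff_const.mul hs).mul hG).add (contDiff_const.mul (hw'.pow 2))).add
    (((contDiff_const.mul hm).mul hs).mul (hw'.pow 2))

lemma continuous_carlemanForm (hw : ContDiff ℝ 2 w) (t R : ℝ) (q : EuclideanSpace ℝ ι) :
    Continuous (carlemanForm t R q w) := by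
  have hs : Continuous (gap R q) := (contDiff_gap (n := 0) R q).continuous
  have hE : Continuous (radialDeriv q w) := (contDiff_radialDeriv (m := 1) hw le_rfl).continuous
  have hG : Continuous (∇ w) := (contDiff_gradient (m := 1) hw le_rfl).continuous
  have hw' : Continuous w := hw.continuous
  unfold carlemanForm carlemanCoeff
  fun_prop

/-- A spherical shell around `q`, cut out by bounds on the squared distance. -/
def annulus (q : EuclideanSpace ℝ ι) (a b : ℝ) : Set (EuclideanSpace ℝ ι) :=
  {x | ‖x - q‖ ^ 2 ∈ Icc a b}

lemma isCompact_annulus (q : EuclideanSpace ℝ ι) (a b : ℝ) : IsCompact (annulus q a b) := by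
  have hclosed : IsClosed (annulus q a b) := isClosed_Icc.preimage (by fun_prop)
  refine (isCompact_closedBall q √b).of_isClosed_subset hclosed fun x hx => ?_
  rw [mem_closedBall_iff_norm]
  exact le_sqrt_of_sq_le hx.2

/-- The parameters for which the Carleman estimate holds in dimension `n`, on functions supported
in the shell `annulus q a (a + 2 * e)` and with weight `carlemanWeight t (a + 3 * e) q`: the shell
is thin, and the large parameter `t` resolves its width. -/
structure CarlemanRegime (n : ℕ) (e a t : ℝ) : Prop where
  width_pos : 0 < e
  width_le : 60 * (n + 2) * e ≤ a
  le_time : 8 ≤ t * e ^ 2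

namespace CarlemanRegime

variable {n : ℕ} (H : CarlemanRegime n e a t)
include H

lemma radius_pos : 0 < a := lt_of_lt_of_le (by have := H.width_pos; positivity) H.width_le

lemma time_pos : 0 < t :=
  pos_of_mul_pos_left ((by norm_num : (0 : ℝ) < 8).trans_le H.le_time) (sq_nonneg e)

lemma width_le_radius : 120 * e ≤ a := by
  nlinarith [H.width_le, mul_nonneg (Nat.cast_nonneg' (α := ℝ) n) H.width_pos.le]

end CarlemanRegime

lemma gap_mem_Icc (hx : x ∈ annulus q a (a + 2 * e)) : gap (a + 3 * e) q x ∈ Icc e (3 * e) := by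
  rw [gap]
  exact ⟨by linarith [hx.2], by linarith [hx.1]⟩

lemma gap_sq_mul_norm_sq_le (H : CarlemanRegime (Fintype.card ι) e a t)
    (hx : x ∈ annulus q a (a + 2 * e)) :
    96 * (gap (a + 3 * e) q x ^ 2 * ‖x - q‖ ^ 2) ≤ 880 * (e ^ 2 * a) := by
  have he := H.width_pos
  obtain ⟨hse, hs3⟩ := gap_mem_Icc hx
  have hgap : 0 ≤ gap (a + 3 * e) q x := he.le.trans hse
  have hprod : gap (a + 3 * e) q x ^ 2 * ‖x - q‖ ^ 2 ≤ (3 * e) ^ 2 * (a + 2 * e) := by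
    gcongr
    exact hx.2
  nlinarith [mul_le_mul_of_nonneg_left H.width_le_radius (sq_nonneg e)]

lemma le_carlemanCoeff (H : CarlemanRegime (Fintype.card ι) e a t)
    (hx : x ∈ annulus q a (a + 2 * e)) :
    100 * t ^ 3 * gap (a + 3 * e) q x ^ 2 * (‖x - q‖ ^ 2) ^ 2
      ≤ carlemanCoeff t (a + 3 * e) q x := by
  have he := H.width_pos
  have ht := H.time_pos
  obtain ⟨hse, hs3⟩ := gap_mem_Icc hx
  rw [carlemanCoeff]
  set s := gap (a + 3 * e) q x
  set ρ := ‖x - q‖ ^ 2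
  set N : ℝ := (Fintype.card ι : ℝ)
  have hN : 0 ≤ N := Nat.cast_nonneg _
  have hs : 0 < s := he.trans_le hse
  have hNs : 20 * ((N + 2) * s) ≤ ρ := by nlinarith [H.width_le, hx.1]
  have hρ : 0 < ρ := by nlinarith [mul_pos (by linarith : 0 < N + 2) hs]
  have hts : 8 ≤ t * s ^ 2 := H.le_time.trans (by gcongr)
  have hNρ : N ≤ t * ρ ^ 2 := by
    have hsq : (20 * ((N + 2) * s)) ^ 2 ≤ ρ ^ 2 := by gcongr
    nlinarith [mul_le_mul_of_nonneg_left hts (sq_nonneg (N + 2))]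
  have hcubic : t ^ 3 * s ^ 2 * ρ * (20 * ((N + 2) * s)) ≤ t ^ 3 * s ^ 2 * ρ * ρ := by gcongr
  have hquad : t ^ 2 * (20 * ((N + 2) * s)) * ρ ≤ t ^ 2 * ρ * ρ := by gcongr
  have hNsq : t ^ 2 * (20 * (N * s)) ^ 2 ≤ t ^ 2 * ρ ^ 2 := by
    gcongr
    nlinarith
  have hlow : t ^ 2 * ρ ^ 2 * 8 ≤ t ^ 2 * ρ ^ 2 * (t * s ^ 2) := by gcongr
  have hconst : t * N ≤ t * (t * ρ ^ 2) := by gcongr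
  nlinarith

variable [DecidableEq ι]

lemma integral_carlemanSymm_mul_carlemanTransport (hw : ContDiff ℝ 2 w) (hc : HasCompactSupport w)
    (t R : ℝ) (q : EuclideanSpace ℝ ι) :
    ∫ x, carlemanSymm t R q w x * carlemanTransport t R q w x = ∫ x, carlemanForm t R q w x := by
  have hA := contDiff_carlemanTransport hw t R q
  have hk := contDiff_carlemanFlux hw t R q
  have hgrad : Continuous (∇ w) := (contDiff_gradient (m := 1) hw le_rfl).continuous
  have hform : Integrable (carlemanForm t R q w) :=
    integrable_of_notMem_tsupport hc (continuous_carlemanForm hw t R q) fun x hx => by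
      simp [carlemanForm, radialDeriv, image_eq_zero_of_notMem_tsupport hx,
        gradient_of_notMem_tsupport hx, fderiv_of_notMem_tsupport ℝ hx]
  have hgreen : Integrable fun x => laplacian w x * carlemanTransport t R q w x
      + fderiv ℝ (carlemanTransport t R q w) x (∇ w x) :=
    integrable_of_notMem_tsupport hc
      (((contDiff_laplacian (m := 0) hw (by simp)).continuous.mul hA.continuous).add
        ((hA.continuous_fderiv one_ne_zero).clm_apply hgrad)) fun x hx => by
      simp [laplacian_of_notMem_tsupport hx, gradient_of_notMem_tsupport hx]
  have hkc : HasCompactSupport (carlemanFlux t R q w) := HasCompactSupport.intro hc fun x hx => by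
    simp [carlemanFlux, image_eq_zero_of_notMem_tsupport hx, gradient_of_notMem_tsupport hx]
  have heuler : Integrable fun x => radialDeriv q (carlemanFlux t R q w) x
      + Fintype.card ι * carlemanFlux t R q w x :=
    integrable_of_notMem_tsupport hkc
      ((contDiff_radialDeriv (m := 0) hk le_rfl).continuous.add
        (continuous_const.mul hk.continuous)) fun x hx => by
      simp [radialDeriv, fderiv_of_notMem_tsupport ℝ hx, image_eq_zero_of_notMem_tsupport hx]
  have hsum : Integrable fun x => carlemanForm t R q w x
      + (laplacian w x * carlemanTransport t R q w x
        + fderiv ℝ (carlemanTransport t R q w) x (∇ w x)) := hform.add hgreen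
  simp_rw [carlemanSymm_mul_carlemanTransport hw]
  rw [integral_add hsum heuler, integral_add hform hgreen,
    integral_laplacian_mul_add_fderiv_gradient hw hc hA, integral_radialDeriv_add hk hkc]
  simp

lemma four_mul_integral_carlemanForm_le (hw : ContDiff ℝ 2 w) (hc : HasCompactSupport w)
    (t R : ℝ) (q : EuclideanSpace ℝ ι) :
    4 * ∫ x, carlemanForm t R q w x
      ≤ ∫ x, (carlemanSymm t R q w x + carlemanTransport t R q w x) ^ 2 := by
  have hS : Continuous (carlemanSymm t R q w) :=
    (contDiff_laplacian (m := 0) hw (by simp)).continuous.add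
      ((contDiff_carlemanPotential (n := 0) t R q).continuous.mul hw.continuous)
  have hA : Continuous (carlemanTransport t R q w) :=
    (contDiff_carlemanTransport hw t R q).continuous
  have hzero : ∀ x, x ∉ tsupport w →
      carlemanSymm t R q w x = 0 ∧ carlemanTransport t R q w x = 0 := fun x hx => by
    simp [carlemanSymm, carlemanTransport, radialDeriv, laplacian_of_notMem_tsupport hx,
      image_eq_zero_of_notMem_tsupport hx, fderiv_of_notMem_tsupport ℝ hx]
  rw [← integral_carlemanSymm_mul_carlemanTransport hw hc, ← integral_const_mul]
  refine integral_mono ?_ ?_ fun x => ?_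
  · exact integrable_of_notMem_tsupport hc (continuous_const.mul (hS.mul hA)) fun x hx => by
      simp [hzero x hx]
  · exact integrable_of_notMem_tsupport hc ((hS.add hA).pow 2) fun x hx => by simp [hzero x hx]
  · simpa [mul_assoc] using
      four_mul_le_sq_add (carlemanSymm t R q w x) (carlemanTransport t R q w x)

end Estimate

section WeightedMeasure

variable {ι : Type*} [Fintype ι] {f w h : EuclideanSpace ℝ ι → ℝ}
  {e a t R : ℝ} {q x : EuclideanSpace ℝ ι}

/-- Lebesgue measure with the density `exp (2 t (R - ‖x - q‖²)²)` of the weighted `L²` norms. -/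
def carlemanMeasure (t R : ℝ) (q : EuclideanSpace ℝ ι) : Measure (EuclideanSpace ℝ ι) :=
  volume.withDensity fun x => ENNReal.ofReal (carlemanWeight t R q x ^ 2)

lemma continuous_gap (R : ℝ) (q : EuclideanSpace ℝ ι) : Continuous (gap R q) :=
  (contDiff_gap (n := 0) R q).continuous

lemma continuous_carlemanWeight (t R : ℝ) (q : EuclideanSpace ℝ ι) :
    Continuous (carlemanWeight t R q) :=
  (contDiff_carlemanWeight (n := 0) t R q).continuous

instance (t R : ℝ) (q : EuclideanSpace ℝ ι) : IsLocallyFiniteMeasure (carlemanMeasure t R q) :=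
  IsLocallyFiniteMeasure.withDensity_ofReal ((continuous_carlemanWeight t R q).pow 2)

lemma integral_carlemanMeasure (t R : ℝ) (q : EuclideanSpace ℝ ι) (f : EuclideanSpace ℝ ι → ℝ) :
    ∫ x, f x ∂carlemanMeasure t R q = ∫ x, carlemanWeight t R q x ^ 2 * f x := by
  have hdensity : Measurable fun x => ENNReal.ofReal (carlemanWeight t R q x ^ 2) :=
    ((continuous_carlemanWeight t R q).pow 2).measurable.ennreal_ofReal
  rw [carlemanMeasure, integral_withDensity_eq_integral_toReal_smul hdensity (by simp)]
  simp [ENNReal.toReal_ofReal, sq_nonneg]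

lemma sq_radialDeriv_le (q : EuclideanSpace ℝ ι) (f : EuclideanSpace ℝ ι → ℝ)
    (x : EuclideanSpace ℝ ι) : radialDeriv q f x ^ 2 ≤ ‖x - q‖ ^ 2 * ‖∇ f x‖ ^ 2 := by
  rw [radialDeriv, ← inner_gradient_left, ← mul_pow, sq_le_sq, abs_mul, abs_norm, abs_norm,
    mul_comm]
  exact abs_real_inner_le_norm _ _

lemma two_mul_mul_radialDeriv_le (q : EuclideanSpace ℝ ι) (f : EuclideanSpace ℝ ι → ℝ)
    (x : EuclideanSpace ℝ ι) (c : ℝ) :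
    2 * (c * radialDeriv q f x) ≤ c ^ 2 * ‖x - q‖ ^ 2 + ‖∇ f x‖ ^ 2 := by
  have hsq := sq_nonneg ‖∇ f x - c • (x - q)‖
  rw [norm_sub_sq_real, real_inner_smul_right, inner_gradient_left, norm_smul, mul_pow, norm_eq_abs,
    sq_abs] at hsq
  rw [radialDeriv]
  linarith

lemma hasCompactSupport_of_tsupport_subset_annulus {b : ℝ} (hsupp : tsupport f ⊆ annulus q a b) :
    HasCompactSupport f :=
  (isCompact_annulus q a b).of_isClosed_subset (isClosed_tsupport f) hsupp

lemma le_four_mul_carlemanForm (hf : ContDiff ℝ 1 f) (H : CarlemanRegime (Fintype.card ι) e a t)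
    (hx : x ∈ annulus q a (a + 2 * e)) :
    carlemanWeight t (a + 3 * e) q x ^ 2
        * (8 * t * a * ‖∇ f x‖ ^ 2 + 100 * t ^ 3 * e ^ 2 * a ^ 2 * f x ^ 2)
      ≤ 4 * carlemanForm t (a + 3 * e) q (fun y => carlemanWeight t (a + 3 * e) q y * f y) x := by
  have hgrad := sq_carlemanWeight_mul_norm_gradient_le hf t (a + 3 * e) q x
  have hcoeff := le_carlemanCoeff H hx
  have he := H.width_pos
  have ht := H.time_pos
  have ha := H.radius_pos
  obtain ⟨hse, hs3⟩ := gap_mem_Icc hx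
  rw [carlemanForm]
  set g := carlemanWeight t (a + 3 * e) q x
  set s := gap (a + 3 * e) q x
  set ρ := ‖x - q‖ ^ 2
  set D := ‖∇ (fun y => carlemanWeight t (a + 3 * e) q y * f y) x‖ ^ 2
  have hs : 0 < s := he.trans_le hse
  have hρ : a ≤ ρ := hx.1
  have hsρ : s ≤ ρ / 40 := by linarith [H.width_le_radius]
  have hgradTerm : 8 * t * a * (g ^ 2 * ‖∇ f x‖ ^ 2)
      ≤ 8 * t * ρ * (2 * D + 32 * t ^ 2 * s ^ 2 * ρ * (g * f x) ^ 2) := by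
    gcongr
  have hzeroTerm : t ^ 3 * e ^ 2 * a ^ 2 * (g * f x) ^ 2
      ≤ t ^ 3 * s ^ 2 * ρ ^ 2 * (g * f x) ^ 2 := by
    gcongr
  have hcoeffTerm := mul_le_mul_of_nonneg_right hcoeff (sq_nonneg (g * f x))
  have hsD : t * s * D ≤ t * (ρ / 40) * D := by gcongr
  have hcard : 0 ≤ (Fintype.card ι : ℝ) * t * s * D := by positivity
  have hE : 0 ≤ t * radialDeriv q (fun y => carlemanWeight t (a + 3 * e) q y * f y) x ^ 2 := by
    positivity
  have hρD : 0 ≤ t * ρ * D := by positivity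
  have hρf : 0 ≤ t ^ 3 * s ^ 2 * ρ ^ 2 * (g * f x) ^ 2 := by positivity
  linarith

lemma integral_carlemanForm_ge (H : CarlemanRegime (Fintype.card ι) e a t)
    (hf : ContDiff ℝ 2 f) (hsupp : tsupport f ⊆ annulus q a (a + 2 * e)) :
    ∫ x, (8 * t * a * ‖∇ f x‖ ^ 2 + 100 * t ^ 3 * e ^ 2 * a ^ 2 * f x ^ 2)
        ∂carlemanMeasure t (a + 3 * e) q
      ≤ 4 * ∫ x, carlemanForm t (a + 3 * e) q
        (fun y => carlemanWeight t (a + 3 * e) q y * f y) x := by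
  set R := a + 3 * e
  set w : EuclideanSpace ℝ ι → ℝ := fun x => carlemanWeight t R q x * f x
  have hc : HasCompactSupport f := hasCompactSupport_of_tsupport_subset_annulus hsupp
  have hw : ContDiff ℝ 2 w := (contDiff_carlemanWeight t R q).mul hf
  have hform (x) (hx : x ∉ tsupport f) : carlemanForm t R q w x = 0 := by
    have hxw : x ∉ tsupport w := fun h => hx (tsupport_mul_subset_right h)
    simp [carlemanForm, radialDeriv, image_eq_zero_of_notMem_tsupport hxw,
      gradient_of_notMem_tsupport hxw, fderiv_of_notMem_tsupport ℝ hxw]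
  have hgrad : Continuous fun x => ‖∇ f x‖ ^ 2 :=
    (contDiff_gradient (m := 1) hf le_rfl).continuous.norm.pow 2
  rw [integral_carlemanMeasure, ← integral_const_mul]
  refine integral_mono ?_ ?_ fun x => ?_
  · exact integrable_of_notMem_tsupport hc (((continuous_carlemanWeight t R q).pow 2).mul
      ((continuous_const.mul hgrad).add (continuous_const.mul (hf.continuous.pow 2))))
      fun x hx => by simp [gradient_of_notMem_tsupport hx, image_eq_zero_of_notMem_tsupport hx]
  · exact integrable_of_notMem_tsupport hc
      (continuous_const.mul (continuous_carlemanForm hw t R q)) fun x hx => by simp [hform x hx]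
  · by_cases hx : x ∈ tsupport f
    · exact le_four_mul_carlemanForm (hf.of_le one_le_two) H (hsupp hx)
    · simp [gradient_of_notMem_tsupport hx, image_eq_zero_of_notMem_tsupport hx, hform x hx]

lemma integrable_sq (hf : Continuous f) (hc : HasCompactSupport f) (t R : ℝ)
    (q : EuclideanSpace ℝ ι) : Integrable (fun x => f x ^ 2) (carlemanMeasure t R q) :=
  integrable_of_notMem_tsupport hc (hf.pow 2) fun x hx => by
    simp [image_eq_zero_of_notMem_tsupport hx]

lemma integrable_norm_gradient_sq (hf : ContDiff ℝ 1 f) (hc : HasCompactSupport f) (t R : ℝ)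
    (q : EuclideanSpace ℝ ι) : Integrable (fun x => ‖∇ f x‖ ^ 2) (carlemanMeasure t R q) :=
  integrable_of_notMem_tsupport hc
    ((contDiff_gradient (m := 0) hf le_rfl).continuous.norm.pow 2) fun x hx => by
    simp [gradient_of_notMem_tsupport hx]

variable [DecidableEq ι]

theorem carleman_estimate (H : CarlemanRegime (Fintype.card ι) e a t) (hf : ContDiff ℝ 2 f)
    (hsupp : tsupport f ⊆ annulus q a (a + 2 * e)) :
    8 * t * a * ∫ x, ‖∇ f x‖ ^ 2 ∂carlemanMeasure t (a + 3 * e) q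
        + 100 * t ^ 3 * e ^ 2 * a ^ 2 * ∫ x, f x ^ 2 ∂carlemanMeasure t (a + 3 * e) q
      ≤ ∫ x, laplacian f x ^ 2 ∂carlemanMeasure t (a + 3 * e) q := by
  set R := a + 3 * e
  set w : EuclideanSpace ℝ ι → ℝ := fun x => carlemanWeight t R q x * f x
  have hc : HasCompactSupport f := hasCompactSupport_of_tsupport_subset_annulus hsupp
  calc _ = ∫ x, (8 * t * a * ‖∇ f x‖ ^ 2 + 100 * t ^ 3 * e ^ 2 * a ^ 2 * f x ^ 2)
            ∂carlemanMeasure t R q := by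
        rw [integral_add
          ((integrable_norm_gradient_sq (hf.of_le one_le_two) hc t R q).const_mul _)
          ((integrable_sq hf.continuous hc t R q).const_mul _),
          integral_const_mul, integral_const_mul]
    _ ≤ 4 * ∫ x, carlemanForm t R q w x := integral_carlemanForm_ge H hf hsupp
    _ ≤ ∫ x, (carlemanSymm t R q w x + carlemanTransport t R q w x) ^ 2 :=
      four_mul_integral_carlemanForm_le ((contDiff_carlemanWeight t R q).mul hf) hc.mul_left t R q
    _ = _ := by
      simp_rw [integral_carlemanMeasure, w, ← carlemanWeight_mul_laplacian hf, mul_pow]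

lemma integral_carlemanMeasure_laplacian_mul (hw : ContDiff ℝ 2 w) (hc : HasCompactSupport w)
    (hh : ContDiff ℝ 1 h) (t R : ℝ) (q : EuclideanSpace ℝ ι) :
    ∫ x, (laplacian w x * h x + fderiv ℝ h x (∇ w x)
      - 8 * t * gap R q x * (h x * radialDeriv q w x)) ∂carlemanMeasure t R q = 0 := by
  have hg : ContDiff ℝ 1 (carlemanWeight t R q) := contDiff_carlemanWeight t R q
  rw [integral_carlemanMeasure, ← integral_laplacian_mul_add_fderiv_gradient hw hc
    (hh.mul (hg.pow 2))]
  congr 1 with x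
  have hg' := (hg.differentiable one_ne_zero x).hasFDerivAt
  have hprod : HasFDerivAt (fun y => h y * carlemanWeight t R q y ^ 2) _ x :=
    (hh.differentiable one_ne_zero x).hasFDerivAt.mul (hg'.pow 2)
  have hrad : ⟪x - q, ∇ w x⟫_ℝ = radialDeriv q w x := inner_gradient_right
  rw [hprod.fderiv]
  simp only [add_apply, smul_apply, smul_eq_mul, nsmul_eq_mul, fderiv_carlemanWeight, hrad]
  push_cast
  ring

end WeightedMeasure

section HigherOrder

variable {ι : Type*} [Fintype ι] [DecidableEq ι] {f p : EuclideanSpace ℝ ι → ℝ}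
  {e a t : ℝ} {q x : EuclideanSpace ℝ ι}

lemma integral_norm_gradient_sq_le (hp : ContDiff ℝ 2 p) (hc : HasCompactSupport p) (t R : ℝ)
    (q : EuclideanSpace ℝ ι) :
    ∫ x, ‖∇ p x‖ ^ 2 ∂carlemanMeasure t R q
      ≤ ∫ x, (-2 * (p x * laplacian p x) + 64 * t ^ 2 * gap R q x ^ 2 * ‖x - q‖ ^ 2 * p x ^ 2)
        ∂carlemanMeasure t R q := by
  have hp' : Continuous p := hp.continuous
  have hs : Continuous (gap R q) := continuous_gap R q
  have hlap : Continuous (laplacian p) := (contDiff_laplacian (m := 0) hp (by simp)).continuous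
  have hG : Continuous (∇ p) := (contDiff_gradient (m := 1) hp le_rfl).continuous
  have hE : Continuous (radialDeriv q p) := (contDiff_radialDeriv (m := 1) hp le_rfl).continuous
  have hgreen := integral_carlemanMeasure_laplacian_mul hp hc (hp.of_le one_le_two) t R q
  simp only [fderiv_apply_gradient_self] at hgreen
  have hgrad := integrable_norm_gradient_sq (hp.of_le one_le_two) hc t R q
  have hgreenInt : Integrable (fun x => laplacian p x * p x + ‖∇ p x‖ ^ 2
      - 8 * t * gap R q x * (p x * radialDeriv q p x)) (carlemanMeasure t R q) :=
    integrable_of_notMem_tsupport hc (by fun_prop) fun x hx => by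
      simp [image_eq_zero_of_notMem_tsupport hx, gradient_of_notMem_tsupport hx]
  calc ∫ x, ‖∇ p x‖ ^ 2 ∂carlemanMeasure t R q
      = ∫ x, (‖∇ p x‖ ^ 2 - 2 * (laplacian p x * p x + ‖∇ p x‖ ^ 2
          - 8 * t * gap R q x * (p x * radialDeriv q p x))) ∂carlemanMeasure t R q := by
        rw [integral_sub hgrad (hgreenInt.const_mul 2), integral_const_mul, hgreen]
        simp
    _ ≤ _ := by
      refine integral_mono (hgrad.sub (hgreenInt.const_mul 2)) ?_ fun x => ?_
      · exact integrable_of_notMem_tsupport hc (by fun_prop) fun x hx => by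
          simp [image_eq_zero_of_notMem_tsupport hx]
      · linarith [two_mul_mul_radialDeriv_le q p x (8 * t * gap R q x * p x)]

lemma integrable_hessSq (hf : ContDiff ℝ 2 f) (hc : HasCompactSupport f) (t R : ℝ)
    (q : EuclideanSpace ℝ ι) : Integrable (hessSq f) (carlemanMeasure t R q) :=
  integrable_of_notMem_tsupport hc (continuous_hessSq hf) fun _ => hessSq_of_notMem_tsupport

lemma integral_hessSq_eq_sum (hf : ContDiff ℝ 2 f) (hc : HasCompactSupport f) (t R : ℝ)
    (q : EuclideanSpace ℝ ι) :
    ∫ x, hessSq f x ∂carlemanMeasure t R q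
      = ∑ j, ∫ x, ‖∇ (partialDeriv j f) x‖ ^ 2 ∂carlemanMeasure t R q :=
  integral_finsetSum _ fun j _ =>
    integrable_norm_gradient_sq (contDiff_partialDeriv hf le_rfl j) (hc.fderiv_apply ℝ _) t R q

lemma integral_hessSq_le_integral_fderiv_laplacian (hf : ContDiff ℝ 3 f)
    (hc : HasCompactSupport f) (t R : ℝ) (q : EuclideanSpace ℝ ι) :
    ∫ x, hessSq f x ∂carlemanMeasure t R q
      ≤ ∫ x, (-2 * fderiv ℝ (laplacian f) x (∇ f x)
        + 64 * t ^ 2 * gap R q x ^ 2 * ‖x - q‖ ^ 2 * ‖∇ f x‖ ^ 2) ∂carlemanMeasure t R q := by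
  have hp (j : ι) : ContDiff ℝ 2 (partialDeriv j f) := contDiff_partialDeriv hf le_rfl j
  have hpc (j : ι) : HasCompactSupport (partialDeriv j f) := hc.fderiv_apply ℝ _
  have hs : Continuous (gap R q) := continuous_gap R q
  have hsum (x) : ∑ j, (-2 * (partialDeriv j f x * laplacian (partialDeriv j f) x)
        + 64 * t ^ 2 * gap R q x ^ 2 * ‖x - q‖ ^ 2 * partialDeriv j f x ^ 2)
      = -2 * fderiv ℝ (laplacian f) x (∇ f x)
        + 64 * t ^ 2 * gap R q x ^ 2 * ‖x - q‖ ^ 2 * ‖∇ f x‖ ^ 2 := by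
    simp only [fderiv_apply_gradient, partialDeriv_laplacian hf, norm_gradient_sq, Finset.mul_sum,
      ← Finset.sum_add_distrib, mul_comm (partialDeriv _ f x)]
  rw [integral_hessSq_eq_sum (hf.of_le (by norm_num)) hc]
  simp_rw [← hsum]
  rw [integral_finsetSum _ fun j _ => ?_]
  · exact Finset.sum_le_sum fun j _ => integral_norm_gradient_sq_le (hp j) (hpc j) t R q
  · have hpj : Continuous (partialDeriv j f) := (hp j).continuous
    have hlap : Continuous (laplacian (partialDeriv j f)) :=
      (contDiff_laplacian (m := 0) (hp j) (by simp)).continuous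
    exact integrable_of_notMem_tsupport (hpc j) (by fun_prop) fun x hx => by
      simp [image_eq_zero_of_notMem_tsupport hx]

lemma integral_hessSq_le (hf : ContDiff ℝ 3 f) (hc : HasCompactSupport f) (t R : ℝ)
    (q : EuclideanSpace ℝ ι) :
    ∫ x, hessSq f x ∂carlemanMeasure t R q
      ≤ ∫ x, (4 * laplacian f x ^ 2 + 96 * t ^ 2 * gap R q x ^ 2 * ‖x - q‖ ^ 2 * ‖∇ f x‖ ^ 2)
        ∂carlemanMeasure t R q := by
  have hf2 : ContDiff ℝ 2 f := hf.of_le (by norm_num)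
  have hs : Continuous (gap R q) := continuous_gap R q
  have hL : ContDiff ℝ 1 (laplacian f) := contDiff_laplacian hf (by norm_num)
  have hlap : Continuous (laplacian f) := hL.continuous
  have hG : Continuous (∇ f) := (contDiff_gradient (m := 1) hf2 le_rfl).continuous
  have hE : Continuous (radialDeriv q f) := (contDiff_radialDeriv (m := 1) hf2 le_rfl).continuous
  have hLG : Continuous fun x => fderiv ℝ (laplacian f) x (∇ f x) :=
    (hL.continuous_fderiv one_ne_zero).clm_apply hG
  have hgreen := integral_carlemanMeasure_laplacian_mul hf2 hc hL t R q
  have hgreenInt : Integrable (fun x => laplacian f x * laplacian f x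
      + fderiv ℝ (laplacian f) x (∇ f x) - 8 * t * gap R q x * (laplacian f x * radialDeriv q f x))
      (carlemanMeasure t R q) :=
    integrable_of_notMem_tsupport hc (by fun_prop) fun x hx => by
      simp [laplacian_of_notMem_tsupport hx, gradient_of_notMem_tsupport hx]
  have hint : Integrable (fun x => -2 * fderiv ℝ (laplacian f) x (∇ f x)
      + 64 * t ^ 2 * gap R q x ^ 2 * ‖x - q‖ ^ 2 * ‖∇ f x‖ ^ 2) (carlemanMeasure t R q) :=
    integrable_of_notMem_tsupport hc (by fun_prop) fun x hx => by
      simp [gradient_of_notMem_tsupport hx]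
  calc _ ≤ ∫ x, (-2 * fderiv ℝ (laplacian f) x (∇ f x)
          + 64 * t ^ 2 * gap R q x ^ 2 * ‖x - q‖ ^ 2 * ‖∇ f x‖ ^ 2) ∂carlemanMeasure t R q :=
        integral_hessSq_le_integral_fderiv_laplacian hf hc t R q
    _ = ∫ x, ((-2 * fderiv ℝ (laplacian f) x (∇ f x)
          + 64 * t ^ 2 * gap R q x ^ 2 * ‖x - q‖ ^ 2 * ‖∇ f x‖ ^ 2)
          + 2 * (laplacian f x * laplacian f x + fderiv ℝ (laplacian f) x (∇ f x)
            - 8 * t * gap R q x * (laplacian f x * radialDeriv q f x)))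
          ∂carlemanMeasure t R q := by
        rw [integral_add hint (hgreenInt.const_mul 2), integral_const_mul, hgreen]
        simp
    _ ≤ _ := by
      refine integral_mono (hint.add (hgreenInt.const_mul 2)) ?_ fun x => ?_
      · exact integrable_of_notMem_tsupport hc (by fun_prop) fun x hx => by
          simp [laplacian_of_notMem_tsupport hx, gradient_of_notMem_tsupport hx]
      · have hE := mul_le_mul_of_nonneg_left (sq_radialDeriv_le q f x)
          (sq_nonneg (t * gap R q x))
        dsimp only
        linarith [sq_nonneg (laplacian f x + 4 * t * gap R q x * radialDeriv q f x)]

lemma carleman_estimate_gradient (H : CarlemanRegime (Fintype.card ι) e a t)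
    (hf : ContDiff ℝ 2 f) (hsupp : tsupport f ⊆ annulus q a (a + 2 * e)) :
    8 * t * a * ∫ x, ‖∇ f x‖ ^ 2 ∂carlemanMeasure t (a + 3 * e) q
      ≤ ∫ x, laplacian f x ^ 2 ∂carlemanMeasure t (a + 3 * e) q := by
  have ht := H.time_pos
  refine (le_add_of_nonneg_right ?_).trans (carleman_estimate H hf hsupp)
  exact mul_nonneg (by positivity) (integral_nonneg fun x => sq_nonneg _)

lemma integral_hessSq_le_of_tsupport_subset (H : CarlemanRegime (Fintype.card ι) e a t)
    (hf : ContDiff ℝ 3 f) (hsupp : tsupport f ⊆ annulus q a (a + 2 * e)) :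
    ∫ x, hessSq f x ∂carlemanMeasure t (a + 3 * e) q
      ≤ 111 * (t * e ^ 2) * ∫ x, laplacian f x ^ 2 ∂carlemanMeasure t (a + 3 * e) q := by
  have hc : HasCompactSupport f := hasCompactSupport_of_tsupport_subset_annulus hsupp
  have hf2 : ContDiff ℝ 2 f := hf.of_le (by norm_num)
  have hs : Continuous (gap (a + 3 * e) q) := continuous_gap _ q
  have hlap : Continuous (laplacian f) := (contDiff_laplacian (m := 0) hf2 (by simp)).continuous
  have hG : Continuous (∇ f) := (contDiff_gradient (m := 1) hf2 le_rfl).continuous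
  have hlapInt := integrable_sq hlap
    (hc.of_isClosed_subset (isClosed_tsupport _) (tsupport_laplacian_subset f)) t (a + 3 * e) q
  have hgradInt := integrable_norm_gradient_sq (hf.of_le (by norm_num)) hc t (a + 3 * e) q
  have hcarleman := carleman_estimate_gradient H hf2 hsupp
  set μ := carlemanMeasure t (a + 3 * e) q
  calc ∫ x, hessSq f x ∂μ
      ≤ ∫ x, (4 * laplacian f x ^ 2
          + 96 * t ^ 2 * gap (a + 3 * e) q x ^ 2 * ‖x - q‖ ^ 2 * ‖∇ f x‖ ^ 2) ∂μ :=
        integral_hessSq_le hf hc t (a + 3 * e) q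
    _ ≤ ∫ x, (4 * laplacian f x ^ 2 + 880 * t ^ 2 * e ^ 2 * a * ‖∇ f x‖ ^ 2) ∂μ := by
      refine integral_mono ?_ ((hlapInt.const_mul 4).add (hgradInt.const_mul _)) fun x => ?_
      · exact integrable_of_notMem_tsupport hc (by fun_prop) fun x hx => by
          simp [laplacian_of_notMem_tsupport hx, gradient_of_notMem_tsupport hx]
      · by_cases hx : x ∈ tsupport f
        · have hcoeff := mul_le_mul_of_nonneg_right (gap_sq_mul_norm_sq_le H (hsupp hx))
            (sq_nonneg (t * ‖∇ f x‖))
          dsimp only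
          linarith
        · simp [gradient_of_notMem_tsupport hx]
    _ = 4 * ∫ x, laplacian f x ^ 2 ∂μ + 880 * t ^ 2 * e ^ 2 * a * ∫ x, ‖∇ f x‖ ^ 2 ∂μ := by
      rw [integral_add (hlapInt.const_mul 4) (hgradInt.const_mul _), integral_const_mul,
        integral_const_mul]
    _ ≤ _ := by
      have hlap0 : 0 ≤ ∫ x, laplacian f x ^ 2 ∂μ := integral_nonneg fun x => sq_nonneg _
      nlinarith [mul_le_mul_of_nonneg_left hcarleman (by linarith [H.le_time] : 0 ≤ t * e ^ 2),
        mul_le_mul_of_nonneg_right H.le_time hlap0]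

lemma integral_jetSq (hf : ContDiff ℝ 3 f) (hc : HasCompactSupport f) (t R : ℝ)
    (q : EuclideanSpace ℝ ι) :
    ∫ x, jetSq f x ∂carlemanMeasure t R q
      = (∑ k, ∫ x, hessSq (partialDeriv k f) x ∂carlemanMeasure t R q)
        + ∫ x, hessSq f x ∂carlemanMeasure t R q
        + ∫ x, ‖∇ f x‖ ^ 2 ∂carlemanMeasure t R q + ∫ x, f x ^ 2 ∂carlemanMeasure t R q := by
  have hthird (k : ι) : Integrable (hessSq (partialDeriv k f)) (carlemanMeasure t R q) :=
    integrable_hessSq (contDiff_partialDeriv hf le_rfl k) (hc.fderiv_apply ℝ _) t R q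
  have hsum := integrable_finsetSum Finset.univ fun k _ => hthird k
  have hhess := integrable_hessSq (hf.of_le (by norm_num)) hc t R q
  have hgrad := integrable_norm_gradient_sq (hf.of_le (by norm_num)) hc t R q
  have hzero := integrable_sq hf.continuous hc t R q
  refine (integral_add' ((hsum.add hhess).add hgrad) hzero).trans ?_
  rw [integral_add' (hsum.add hhess) hgrad, integral_add' hsum hhess,
    integral_finsetSum _ fun k _ => hthird k]

lemma sum_integral_hessSq_partialDeriv_le (H : CarlemanRegime (Fintype.card ι) e a t)
    (hf : ContDiff ℝ 4 f) (hsupp : tsupport f ⊆ annulus q a (a + 2 * e)) :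
    ∑ k, ∫ x, hessSq (partialDeriv k f) x ∂carlemanMeasure t (a + 3 * e) q
      ≤ 111 * (t * e ^ 2) * ∫ x, ‖∇ (laplacian f) x‖ ^ 2 ∂carlemanMeasure t (a + 3 * e) q := by
  have hc : HasCompactSupport f := hasCompactSupport_of_tsupport_subset_annulus hsupp
  have hL : ContDiff ℝ 2 (laplacian f) := contDiff_laplacian hf (by norm_num)
  have hf3 : ContDiff ℝ 3 f := hf.of_le (by norm_num)
  have hLc : HasCompactSupport (laplacian f) :=
    hc.of_isClosed_subset (isClosed_tsupport _) (tsupport_laplacian_subset f)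
  simp_rw [norm_gradient_sq]
  rw [integral_finsetSum _ fun k _ => integrable_sq
    (contDiff_partialDeriv (m := 1) hL le_rfl k).continuous (hLc.fderiv_apply ℝ _) _ _ _,
    Finset.mul_sum]
  simp_rw [partialDeriv_laplacian hf3]
  exact Finset.sum_le_sum fun k _ => integral_hessSq_le_of_tsupport_subset H
    (contDiff_partialDeriv hf (by norm_num) k) ((tsupport_partialDeriv_subset f k).trans hsupp)

lemma mul_add_le_of_carleman {P τ J₃ J₂ J₁ J₀ L₁ L₀ B : ℝ} (hτ : 8 ≤ τ) (hP : τ ≤ P)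
    (hJ₁ : 0 ≤ J₁) (hJ₀ : 0 ≤ J₀) (hL₁ : 0 ≤ L₁) (hL₀ : 0 ≤ L₀)
    (hJ₃ : J₃ ≤ 111 * τ * L₁) (hJ₂ : J₂ ≤ 111 * τ * L₀)
    (hJL : 8 * P * J₁ + 100 * P ^ 2 * τ * J₀ ≤ L₀)
    (hLB : 8 * P * L₁ + 100 * P ^ 2 * τ * L₀ ≤ B) :
    P * (J₃ + J₂ + J₁ + J₀) ≤ 15 * τ * B := by
  have hP8 : 8 ≤ P := hτ.trans hP
  have hlow : J₁ + J₀ ≤ L₀ := by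
    have hcoeff : 1 ≤ P ^ 2 * τ := by nlinarith
    nlinarith [mul_le_mul_of_nonneg_right hcoeff hJ₀]
  have hB : 8 * (P * L₁) + 800 * τ * (P * L₀) ≤ B := by
    nlinarith [mul_nonneg (by nlinarith : 0 ≤ (P - 8) * τ) (by positivity : 0 ≤ P * L₀)]
  have hPL : P * L₀ ≤ τ * (P * L₀) := le_mul_of_one_le_left (by positivity) (by linarith)
  have hτPL : τ * (P * L₀) ≤ τ * (τ * (P * L₀)) := by gcongr
  calc P * (J₃ + J₂ + J₁ + J₀)
      ≤ P * (111 * τ * L₁ + 111 * τ * L₀ + L₀) := by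
        gcongr ?_ * ?_
        linarith
    _ ≤ 15 * τ * (8 * (P * L₁) + 800 * τ * (P * L₀)) := by
        nlinarith [mul_nonneg (by linarith : 0 ≤ τ) (by positivity : 0 ≤ P * L₁)]
    _ ≤ 15 * τ * B := by gcongr

theorem carleman_estimate_bilaplacian (H : CarlemanRegime (Fintype.card ι) e a t)
    (hea : e ^ 2 ≤ a) (hf : ContDiff ℝ 4 f) (hsupp : tsupport f ⊆ annulus q a (a + 2 * e)) :
    a * ∫ x, jetSq f x ∂carlemanMeasure t (a + 3 * e) q
      ≤ 15 * e ^ 2 * ∫ x, laplacian (laplacian f) x ^ 2 ∂carlemanMeasure t (a + 3 * e) q := by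
  have ht := H.time_pos
  have hc : HasCompactSupport f := hasCompactSupport_of_tsupport_subset_annulus hsupp
  have hL : ContDiff ℝ 2 (laplacian f) := contDiff_laplacian hf (by norm_num)
  have hJL := carleman_estimate H (hf.of_le (by norm_num)) hsupp
  have hLB := carleman_estimate H hL ((tsupport_laplacian_subset f).trans hsupp)
  have hpowers : 100 * t ^ 3 * e ^ 2 * a ^ 2 = 100 * (t * a) ^ 2 * (t * e ^ 2) := by ring
  rw [hpowers, mul_assoc 8] at hJL hLB
  have hmain := mul_add_le_of_carleman H.le_time (by gcongr)
    (integral_nonneg fun x => sq_nonneg _) (integral_nonneg fun x => sq_nonneg _)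
    (integral_nonneg fun x => sq_nonneg _) (integral_nonneg fun x => sq_nonneg _)
    (sum_integral_hessSq_partialDeriv_le H hf hsupp)
    (integral_hessSq_le_of_tsupport_subset H (hf.of_le (by norm_num)) hsupp) hJL hLB
  rw [← integral_jetSq (hf.of_le (by norm_num)) hc] at hmain
  refine le_of_mul_le_mul_left ?_ ht
  linarith

end HigherOrder

section Decay

lemma eq_zero_of_integral_exp_mul_le {X : Type*} [TopologicalSpace X] [R1Space X]
    [MeasurableSpace X] [OpensMeasurableSpace X] {μ : Measure X} [IsFiniteMeasureOnCompacts μ]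
    [μ.IsOpenPosMeasure] {φ G : X → ℝ} {K c : ℝ} (hφ : Continuous φ) (hG : Continuous G)
    (hc : HasCompactSupport G) (hG0 : ∀ x, 0 ≤ G x)
    (hle : ∀ᶠ t in atTop, ∫ x, exp (t * φ x) * G x ∂μ ≤ K * exp (c * t)) {x : X}
    (hx : c < φ x) : G x = 0 := by
  by_contra hGx
  let H : X → ℝ := fun y => max (φ y - c) 0 * G y
  have hHcont : Continuous H := ((hφ.sub continuous_const).max continuous_const).mul hG
  have hpos : 0 < ∫ y, H y ∂μ :=
    hHcont.integral_pos_of_hasCompactSupport_nonneg_nonzero hc.mul_left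
      (fun y => mul_nonneg (le_max_right _ _) (hG0 y))
      (mul_ne_zero (lt_max_of_lt_left (sub_pos.2 hx)).ne' hGx)
  have hbound : ∀ᶠ t in atTop, t * ∫ y, H y ∂μ ≤ K := by
    filter_upwards [hle] with t ht
    refine le_of_mul_le_mul_right ?_ (exp_pos (c * t))
    refine le_trans ?_ ht
    rw [mul_right_comm, ← integral_const_mul]
    refine integral_mono
      ((continuous_const.mul hHcont).integrable_of_hasCompactSupport hc.mul_left.mul_left)
      ((by fun_prop : Continuous _).integrable_of_hasCompactSupport hc.mul_left) fun y => ?_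
    have hexp : t * max (φ y - c) 0 ≤ exp (t * (φ y - c)) := by
      rcases le_total (φ y - c) 0 with h | h
      · simp only [max_eq_right h, mul_zero, (exp_pos _).le]
      · rw [max_eq_left h]
        linarith [add_one_le_exp (t * (φ y - c))]
    calc t * exp (c * t) * H y = exp (c * t) * (t * max (φ y - c) 0) * G y := by
          simp only [H]
          ring
      _ ≤ exp (c * t) * exp (t * (φ y - c)) * G y := by
          gcongr
          exact hG0 y
      _ = exp (t * φ y) * G y := by
          rw [← exp_add]
          ring_nf
  obtain ⟨t, htK, hKt⟩ :=
    (hbound.and ((tendsto_id.atTop_mul_const hpos).eventually_gt_atTop K)).exists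
  exact hKt.not_ge htK

end Decay

section Locality

variable {ι : Type*} [DecidableEq ι] {f g u : EuclideanSpace ℝ ι → ℝ} {q x : EuclideanSpace ℝ ι}

lemma partialDeriv_eventuallyEq (h : f =ᶠ[𝓝 x] g) (i : ι) :
    partialDeriv i f =ᶠ[𝓝 x] partialDeriv i g :=
  h.fderiv.mono fun y hy => by rw [partialDeriv, partialDeriv, hy]

variable [Fintype ι]

lemma laplacian_eventuallyEq (h : f =ᶠ[𝓝 x] g) : laplacian f =ᶠ[𝓝 x] laplacian g :=
  (eventually_all.2 fun i => partialDeriv_eventuallyEq (partialDeriv_eventuallyEq h i) i).mono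
    fun _ hy => Finset.sum_congr rfl fun i _ => hy i

lemma hessSq_congr_of_eventuallyEq (h : f =ᶠ[𝓝 x] g) : hessSq f x = hessSq g x :=
  Finset.sum_congr rfl fun j _ => by
    rw [(partialDeriv_eventuallyEq h j).gradient_eq]

lemma jetSq_congr_of_eventuallyEq (h : f =ᶠ[𝓝 x] g) : jetSq f x = jetSq g x := by
  have hthird (k : ι) : hessSq (partialDeriv k f) x = hessSq (partialDeriv k g) x :=
    hessSq_congr_of_eventuallyEq (partialDeriv_eventuallyEq h k)
  simp only [jetSq, hthird, hessSq_congr_of_eventuallyEq h, h.gradient_eq,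
    h.eq_of_nhds]

lemma jetSq_nonneg (f : EuclideanSpace ℝ ι → ℝ) (x : EuclideanSpace ℝ ι) : 0 ≤ jetSq f x := by
  unfold jetSq hessSq
  positivity

omit [DecidableEq ι] in
lemma exists_contDiff_tsupport_subset_annulus {n : ℕ∞} {a m b : ℝ} (ha : 0 ≤ a) (ham : a < m)
    (hmb : m < b) (hu : ∀ x, ‖x - q‖ ^ 2 ≤ b → ContDiffAt ℝ n u x)
    (hzero : ∀ x, ‖x - q‖ ^ 2 < a → u x = 0) :
    ∃ f, ContDiff ℝ n f ∧ tsupport f ⊆ annulus q a b ∧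
      ∀ x, ‖x - q‖ ^ 2 < m → f =ᶠ[𝓝 x] u := by
  have hb : 0 ≤ b := by linarith
  let χ : ContDiffBump q :=
    ⟨√m, √b, sqrt_pos.2 (by linarith), sqrt_lt_sqrt (by linarith) hmb⟩
  have hout (x : EuclideanSpace ℝ ι) (hx : x ∈ tsupport χ) : ‖x - q‖ ^ 2 ≤ b := by
    rwa [χ.tsupport_eq, mem_closedBall_iff_norm, le_sqrt (norm_nonneg _) hb] at hx
  have hsupp : tsupport (fun x => χ x * u x) ⊆ tsupport χ := tsupport_mul_subset_left
  refine ⟨fun x => χ x * u x, contDiff_iff_contDiffAt.2 fun x => ?_, fun x hx => ⟨?_, ?_⟩,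
    fun x hx => ?_⟩
  · by_cases hx : x ∈ tsupport χ
    · exact χ.contDiffAt.mul (hu x (hout x hx))
    · exact contDiffAt_const.congr_of_eventuallyEq
        (notMem_tsupport_iff_eventuallyEq.1 fun h => hx (hsupp h))
  · have hclosed : IsClosed {x : EuclideanSpace ℝ ι | a ≤ ‖x - q‖ ^ 2} :=
      isClosed_le continuous_const (by fun_prop)
    refine closure_minimal (fun y hy => ?_) hclosed hx
    by_contra hya
    exact hy (by simp [hzero y (not_le.1 hya)])
  · exact hout x (hsupp hx)
  · have hball : x ∈ Metric.ball q χ.rIn := by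
      rw [mem_ball_iff_norm]
      exact lt_sqrt_of_sq_lt hx
    filter_upwards [χ.eventuallyEq_one_of_mem_ball hball] with y hy
    simp [hy]

end Locality

section Propagation

variable {ι κ : Type*} [Fintype ι] [Fintype κ] {B D : EuclideanSpace ℝ ι → ℝ} {a e t R : ℝ}
  {q x : EuclideanSpace ℝ ι}

lemma carlemanWeight_sq (t R : ℝ) (q x : EuclideanSpace ℝ ι) :
    carlemanWeight t R q x ^ 2 = exp (t * (2 * gap R q x ^ 2)) := by
  rw [carlemanWeight, ← exp_nat_mul]
  ring_nf

lemma sq_carlemanWeight_mul_le (ht : 0 ≤ t) (hx : ‖x - q‖ ^ 2 ≤ a + 3 * e)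
    {b d : ℝ} (hb : 0 ≤ b) (hd : 0 ≤ d) (hbd : ‖x - q‖ ^ 2 < a + e → b ≤ d) :
    carlemanWeight t (a + 3 * e) q x ^ 2 * b
      ≤ carlemanWeight t (a + 3 * e) q x ^ 2 * d + exp (8 * e ^ 2 * t) * b := by
  rcases lt_or_ge (‖x - q‖ ^ 2) (a + e) with hnear | hfar
  · have hexp : 0 ≤ exp (8 * e ^ 2 * t) * b := by positivity
    linarith [mul_le_mul_of_nonneg_left (hbd hnear) (sq_nonneg (carlemanWeight t (a + 3 * e) q x))]
  · have hgap : gap (a + 3 * e) q x ^ 2 ≤ (2 * e) ^ 2 := by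
      rw [gap]
      exact pow_le_pow_left₀ (by linarith) (by linarith) 2
    have hweight : carlemanWeight t (a + 3 * e) q x ^ 2 ≤ exp (8 * e ^ 2 * t) := by
      rw [carlemanWeight_sq, exp_le_exp]
      nlinarith
    linarith [mul_le_mul_of_nonneg_right hweight hb,
      mul_nonneg (sq_nonneg (carlemanWeight t (a + 3 * e) q x)) hd]

lemma integral_carlemanMeasure_le_add (ht : 0 ≤ t) (he : 0 ≤ e) (hB : Continuous B)
    (hD : Continuous D) (hBs : tsupport B ⊆ annulus q a (a + 2 * e)) (hDc : HasCompactSupport D)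
    (hB0 : ∀ x, 0 ≤ B x) (hD0 : ∀ x, 0 ≤ D x) (hBD : ∀ x, ‖x - q‖ ^ 2 < a + e → B x ≤ D x) :
    ∫ x, B x ∂carlemanMeasure t (a + 3 * e) q
      ≤ ∫ x, D x ∂carlemanMeasure t (a + 3 * e) q + exp (8 * e ^ 2 * t) * ∫ x, B x := by
  have hBc : HasCompactSupport B := hasCompactSupport_of_tsupport_subset_annulus hBs
  have hweight : Continuous fun x => carlemanWeight t (a + 3 * e) q x ^ 2 :=
    (continuous_carlemanWeight _ _ _).pow 2
  have hBi : Integrable fun x => carlemanWeight t (a + 3 * e) q x ^ 2 * B x :=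
    (hweight.mul hB).integrable_of_hasCompactSupport hBc.mul_left
  have hDi : Integrable fun x => carlemanWeight t (a + 3 * e) q x ^ 2 * D x :=
    (hweight.mul hD).integrable_of_hasCompactSupport hDc.mul_left
  have hBe : Integrable fun x => exp (8 * e ^ 2 * t) * B x :=
    (hB.integrable_of_hasCompactSupport hBc).const_mul _
  rw [integral_carlemanMeasure, integral_carlemanMeasure, ← integral_const_mul,
    ← integral_add hDi hBe]
  refine integral_mono hBi (hDi.add hBe) fun x => ?_
  by_cases hx : x ∈ tsupport B
  · exact sq_carlemanWeight_mul_le ht (by linarith [(hBs hx).2]) (hB0 x) (hD0 x) (hBD x)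
  · simp only [image_eq_zero_of_notMem_tsupport hx, mul_zero, add_zero]
    exact mul_nonneg (sq_nonneg _) (hD0 x)

variable [DecidableEq ι] {u f : κ → EuclideanSpace ℝ ι → ℝ} {K : ℝ}

lemma hasCompactSupport_sum_jetSq (hf : ∀ b, HasCompactSupport (f b)) :
    HasCompactSupport fun x => ∑ b, jetSq (f b) x := by
  refine HasCompactSupport.intro (isCompact_iUnion hf) fun x hx => ?_
  exact Finset.sum_eq_zero fun b _ =>
    jetSq_of_notMem_tsupport fun h => hx (mem_iUnion_of_mem b h)

lemma integrable_jetSq {f : EuclideanSpace ℝ ι → ℝ} (hf : ContDiff ℝ 3 f)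
    (hc : HasCompactSupport f) (t R : ℝ) (q : EuclideanSpace ℝ ι) :
    Integrable (jetSq f) (carlemanMeasure t R q) :=
  integrable_of_notMem_tsupport hc (continuous_jetSq hf) fun _ => jetSq_of_notMem_tsupport

lemma integral_sum_jetSq_le (H : CarlemanRegime (Fintype.card ι) e a t) (hea : e ^ 2 ≤ a)
    (hK : 0 ≤ K) (hsmall : 30 * Fintype.card κ * K * e ^ 2 ≤ a) (hf : ∀ b, ContDiff ℝ 4 (f b))
    (hsupp : ∀ b, tsupport (f b) ⊆ annulus q a (a + 2 * e))
    (hbound : ∀ b x, ‖x - q‖ ^ 2 < a + e →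
      laplacian (laplacian (f b)) x ^ 2 ≤ K * ∑ c, jetSq (f c) x) :
    a * ∫ x, ∑ b, jetSq (f b) x ∂carlemanMeasure t (a + 3 * e) q
      ≤ 30 * e ^ 2 * (exp (8 * e ^ 2 * t) * ∑ b, ∫ x, laplacian (laplacian (f b)) x ^ 2) := by
  set μ := carlemanMeasure t (a + 3 * e) q
  set J := ∫ x, ∑ b, jetSq (f b) x ∂μ
  have hc (b : κ) : HasCompactSupport (f b) :=
    hasCompactSupport_of_tsupport_subset_annulus (hsupp b)
  have hf3 (b : κ) : ContDiff ℝ 3 (f b) := (hf b).of_le (by norm_num)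
  have hJ : ∫ x, K * ∑ c, jetSq (f c) x ∂μ = K * J := integral_const_mul _ _
  have hJ0 : 0 ≤ J := integral_nonneg fun x => Finset.sum_nonneg fun b _ => jetSq_nonneg (f b) x
  have hL (b : κ) : ∫ x, laplacian (laplacian (f b)) x ^ 2 ∂μ
      ≤ K * J + exp (8 * e ^ 2 * t) * ∫ x, laplacian (laplacian (f b)) x ^ 2 := by
    have hLsupp : tsupport (fun x => laplacian (laplacian (f b)) x ^ 2) ⊆ tsupport (f b) :=
      (tsupport_comp_subset (g := (· ^ 2)) (by simp) (laplacian (laplacian (f b)))).trans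
        ((tsupport_laplacian_subset _).trans (tsupport_laplacian_subset _))
    rw [← hJ]
    exact integral_carlemanMeasure_le_add H.time_pos.le H.width_pos.le
      ((contDiff_laplacian (m := 0) (contDiff_laplacian (m := 2) (hf b) (by norm_num))
        (by norm_num)).continuous.pow 2)
      (continuous_const.mul (continuous_finsetSum _ fun c _ => continuous_jetSq (hf3 c)))
      (hLsupp.trans (hsupp b)) (hasCompactSupport_sum_jetSq hc).mul_left (fun x => sq_nonneg _)
      (fun x => mul_nonneg hK (Finset.sum_nonneg fun c _ => jetSq_nonneg (f c) x)) (hbound b)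
  have hcarleman : a * J ≤ 15 * e ^ 2 * ∑ b, ∫ x, laplacian (laplacian (f b)) x ^ 2 ∂μ := by
    simp only [J]
    rw [integral_finsetSum _ fun b _ => integrable_jetSq (hf3 b) (hc b) _ _ _, Finset.mul_sum,
      Finset.mul_sum]
    exact Finset.sum_le_sum fun b _ => carleman_estimate_bilaplacian H hea (hf b) (hsupp b)
  have hsum : ∑ b, ∫ x, laplacian (laplacian (f b)) x ^ 2 ∂μ ≤ Fintype.card κ * (K * J)
      + exp (8 * e ^ 2 * t) * ∑ b, ∫ x, laplacian (laplacian (f b)) x ^ 2 := by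
    refine (Finset.sum_le_sum fun b _ => hL b).trans_eq ?_
    simp [Finset.sum_add_distrib, Finset.mul_sum]
  nlinarith [mul_le_mul_of_nonneg_left hsum (sq_nonneg e), mul_le_mul_of_nonneg_right hsmall hJ0]

theorem eq_zero_of_sq_bilaplacian_le (he : 0 < e) (hwidth : 60 * (Fintype.card ι + 2) * e ≤ a)
    (hea : e ^ 2 ≤ a) (hK : 0 ≤ K) (hsmall : 30 * Fintype.card κ * K * e ^ 2 ≤ a)
    (hf : ∀ b, ContDiff ℝ 4 (f b)) (hsupp : ∀ b, tsupport (f b) ⊆ annulus q a (a + 2 * e))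
    (hbound : ∀ b x, ‖x - q‖ ^ 2 < a + e →
      laplacian (laplacian (f b)) x ^ 2 ≤ K * ∑ c, jetSq (f c) x)
    (hx : ‖x - q‖ ^ 2 < a + e) (b : κ) : f b x = 0 := by
  have ha : 0 < a := lt_of_lt_of_le (by positivity) hwidth
  have hjet : ∑ c, jetSq (f c) x = 0 := by
    refine eq_zero_of_integral_exp_mul_le (μ := volume) (φ := fun x => 2 * gap (a + 3 * e) q x ^ 2)
      (K := a⁻¹ * (30 * e ^ 2 * ∑ b, ∫ x, laplacian (laplacian (f b)) x ^ 2)) (c := 8 * e ^ 2)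
      (continuous_const.mul ((continuous_gap _ _).pow 2))
      (continuous_finsetSum _ fun c _ => continuous_jetSq ((hf c).of_le (by norm_num)))
      (hasCompactSupport_sum_jetSq fun c => hasCompactSupport_of_tsupport_subset_annulus (hsupp c))
      (fun x => Finset.sum_nonneg fun c _ => jetSq_nonneg (f c) x) ?_ ?_
    · filter_upwards [eventually_ge_atTop (8 / e ^ 2)] with t ht
      have hregime : CarlemanRegime (Fintype.card ι) e a t :=
        ⟨he, hwidth, (div_le_iff₀ (by positivity)).1 ht⟩
      have hdecay := integral_sum_jetSq_le hregime hea hK hsmall hf hsupp hbound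
      simp only [integral_carlemanMeasure, carlemanWeight_sq] at hdecay
      rw [mul_assoc, le_inv_mul_iff₀ ha]
      linarith
    · rw [gap]
      nlinarith
  have hsq : jetSq (f b) x = 0 :=
    (Finset.sum_eq_zero_iff_of_nonneg fun c _ => jetSq_nonneg (f c) x).1 hjet b (Finset.mem_univ b)
  have hlow : f b x ^ 2 ≤ jetSq (f b) x := by
    unfold jetSq hessSq
    exact le_add_of_nonneg_left (by positivity)
  exact pow_eq_zero_iff two_ne_zero |>.1 (le_antisymm (hlow.trans_eq hsq) (sq_nonneg _))

theorem exists_gt_forall_mem_ball_eq_zero {r d C : ℝ} (hr : 0 < r) (hrd : r < d)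
    (hu : ∀ b, ∀ x ∈ Metric.closedBall q d, ContDiffAt ℝ 4 (u b) x)
    (hbound : ∀ b, ∀ x ∈ Metric.closedBall q d,
      |laplacian (laplacian (u b)) x| ≤ C * √(∑ c, jetSq (u c) x))
    (hzero : ∀ b, ∀ x ∈ Metric.ball q r, u b x = 0) :
    ∃ r' > r, ∀ b, ∀ x ∈ Metric.ball q r', u b x = 0 := by
  have hsmall (g : ℝ → ℝ) (hg : Continuous g) (c : ℝ) (hc : g 0 < c) :
      ∀ᶠ e in 𝓝[>] (0 : ℝ), g e ≤ c :=
    nhdsWithin_le_nhds ((hg.tendsto 0).eventually_le_const hc)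
  have ha : 0 < r ^ 2 := by positivity
  obtain ⟨e, he, hwidth, hea, hCe, hed⟩ := (eventually_mem_nhdsWithin.and <|
    (hsmall (60 * (Fintype.card ι + 2) * ·) (by fun_prop) (r ^ 2) (by simpa)).and <|
    (hsmall (· ^ 2) (by fun_prop) (r ^ 2) (by simpa)).and <|
    (hsmall (30 * Fintype.card κ * C ^ 2 * · ^ 2) (by fun_prop) (r ^ 2) (by simpa)).and <|
    hsmall (r ^ 2 + 2 * ·) (by fun_prop) (d ^ 2) (by simp only [mul_zero, add_zero]; gcongr)).exists
  rw [mem_Ioi] at he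
  have hball (x : EuclideanSpace ℝ ι) (hx : ‖x - q‖ ^ 2 ≤ r ^ 2 + 2 * e) :
      x ∈ Metric.closedBall q d :=
    mem_closedBall_iff_norm.2 <| le_of_sq_le_sq (hx.trans hed) (by linarith)
  choose f hf hsupp hfu using fun b => exists_contDiff_tsupport_subset_annulus (n := 4) (u := u b)
    (m := r ^ 2 + e) ha.le (by linarith) (by linarith) (fun x hx => hu b x (hball x hx))
    fun x hx => hzero b x (mem_ball_iff_norm.2 (lt_of_pow_lt_pow_left₀ 2 hr.le hx))
  refine ⟨√(r ^ 2 + e), lt_sqrt_of_sq_lt (by linarith), fun b x hx => ?_⟩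
  rw [mem_ball_iff_norm, lt_sqrt (norm_nonneg _)] at hx
  rw [← (hfu b x hx).eq_of_nhds]
  refine eq_zero_of_sq_bilaplacian_le he hwidth hea (sq_nonneg C) hCe hf hsupp
    (fun b x hx => ?_) hx b
  rw [(laplacian_eventuallyEq (laplacian_eventuallyEq (hfu b x hx))).eq_of_nhds,
    Finset.sum_congr rfl fun c _ => jetSq_congr_of_eventuallyEq (hfu c x hx)]
  have hS : 0 ≤ ∑ c, jetSq (u c) x := Finset.sum_nonneg fun c _ => jetSq_nonneg (u c) x
  rw [← sq_abs, ← sq_sqrt hS, ← mul_pow]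
  exact pow_le_pow_left₀ (abs_nonneg _) (hbound b x (hball x (by linarith))) 2

end Propagation

section Continuation

lemma subset_of_isPreconnected_of_exists_gt_ball_subset {X : Type*} [PseudoMetricSpace X]
    {U Z : Set X} (hU : IsPreconnected U) (hZ : IsOpen Z) (hne : (U ∩ Z).Nonempty)
    (hext : ∀ p ∈ U, ∃ δ > 0, ∀ q r, dist p q < δ → 0 < r → r < δ → Metric.ball q r ⊆ Z →
      ∃ r' > r, Metric.ball q r' ⊆ Z) : U ⊆ Z := by
  refine hU.subset_of_closure_inter_subset hZ hne fun p ⟨hpZ, hpU⟩ => ?_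
  by_contra hp
  obtain ⟨δ, hδ, hgrow⟩ := hext p hpU
  obtain ⟨q, hqZ, hpq⟩ := Metric.mem_closure_iff.1 hpZ δ hδ
  have hdist : Metric.infDist q Zᶜ ≤ dist p q :=
    (Metric.infDist_le_dist_of_mem hp).trans_eq (dist_comm q p)
  have hpos : 0 < Metric.infDist q Zᶜ :=
    (hZ.isClosed_compl.notMem_iff_infDist_pos ⟨p, hp⟩).1 fun h => h hqZ
  obtain ⟨r, hr, hrZ⟩ := hgrow q (Metric.infDist q Zᶜ) hpq hpos (hdist.trans_lt hpq)
    Metric.ball_infDist_compl_subset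
  refine hr.not_ge ((Metric.le_infDist ⟨p, hp⟩).2 fun y hy => ?_)
  by_contra hlt
  exact hy (hrZ (Metric.mem_ball'.2 (not_le.1 hlt)))

end Continuation

section Coordinates

lemma bilap_eq_laplacian_laplacian (u : EuclideanSpace ℝ (Fin 3) → ℝ) :
    bilap u = laplacian (laplacian u) :=
  rfl

lemma esum_eq_jetSq (u : EuclideanSpace ℝ (Fin 3) → ℝ) : esum u = jetSq u := by
  have hgrad (f : EuclideanSpace ℝ (Fin 3) → ℝ) (x : EuclideanSpace ℝ (Fin 3)) :
      ∑ i, pd f x i ^ 2 = ‖∇ f x‖ ^ 2 := (norm_gradient_sq f x).symm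
  have hhess (f : EuclideanSpace ℝ (Fin 3) → ℝ) (x : EuclideanSpace ℝ (Fin 3)) :
      ∑ i, ∑ j, pd2 f x i j ^ 2 = hessSq f x := by
    rw [Finset.sum_comm]
    exact Finset.sum_congr rfl fun j _ => hgrad (partialDeriv j f) x
  have hthird (x : EuclideanSpace ℝ (Fin 3)) :
      ∑ i, ∑ j, ∑ k, pd3 u x i j k ^ 2 = ∑ k, hessSq (partialDeriv k u) x :=
    calc ∑ i, ∑ j, ∑ k, pd3 u x i j k ^ 2
        = ∑ i, ∑ k, ∑ j, pd3 u x i j k ^ 2 := Finset.sum_congr rfl fun i _ => Finset.sum_comm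
      _ = ∑ k, ∑ i, ∑ j, pd3 u x i j k ^ 2 := Finset.sum_comm
      _ = ∑ k, hessSq (partialDeriv k u) x :=
        Finset.sum_congr rfl fun k _ => hhess (partialDeriv k u) x
  funext x
  rw [esum, jetSq, hthird, hhess, hgrad]

end Coordinates

end BilaplacianCarleman

open BilaplacianCarleman Filter Topology in
theorem unique_continuation_coupled_bilaplacian_general {ι κ : Type*} [Fintype ι]
    [DecidableEq ι] [Fintype κ] {U V : Set (EuclideanSpace ℝ ι)}
    {u : κ → EuclideanSpace ℝ ι → ℝ} (hUo : IsOpen U) (hU : IsPreconnected U)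
    (hu : ∀ b, ContDiffOn ℝ 4 (u b) U)
    (hbound : ∀ p ∈ U, ∃ C : ℝ, ∀ᶠ x in 𝓝 p, ∀ b,
      |laplacian (laplacian (u b)) x| ≤ C * √(∑ c, jetSq (u c) x))
    (hVo : IsOpen V) (hV : V.Nonempty) (hVU : V ⊆ U) (hzero : ∀ b, ∀ x ∈ V, u b x = 0) :
    ∀ x ∈ U, ∀ b, u b x = 0 := by
  let Z : Set (EuclideanSpace ℝ ι) := interior {x | ∀ b, u b x = 0}
  have hVZ : V ⊆ Z := interior_maximal (fun x hx b => hzero b x hx) hVo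
  suffices hUZ : U ⊆ Z from fun x hx => interior_subset (hUZ hx)
  refine subset_of_isPreconnected_of_exists_gt_ball_subset hU isOpen_interior
    (hV.mono fun x hx => ⟨hVU hx, hVZ hx⟩) fun p hp => ?_
  obtain ⟨C, hC⟩ := hbound p hp
  obtain ⟨δ, hδ, hball⟩ := Metric.eventually_nhds_iff_ball.1 (hC.and (hUo.mem_nhds hp))
  refine ⟨δ / 2, half_pos hδ, fun q r hpq hr hrδ hrZ => ?_⟩
  have hq : Metric.closedBall q (δ / 2) ⊆ Metric.ball p δ :=
    Metric.closedBall_subset_ball' (by rw [dist_comm]; linarith)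
  obtain ⟨r', hr', hzero'⟩ := exists_gt_forall_mem_ball_eq_zero hr hrδ
    (fun b x hx => (hu b).contDiffAt (hUo.mem_nhds (hball x (hq hx)).2))
    (fun b x hx => (hball x (hq hx)).1 b) fun b x hx => interior_subset (hrZ hx) b
  exact ⟨r', hr', interior_maximal (fun x hx b => hzero' b x hx) Metric.isOpen_ball⟩

/-- Unique continuation for a coupled fourth-order elliptic system: if `u, v ∈ C⁴(U)`
on an open connected `U ⊆ ℝ³` satisfy `|Δ²u| ≤ C (e(u)+e(v))^{1/2}` and
`|Δ²v| ≤ C (e(u)+e(v))^{1/2}` pointwise on `U`, and `u, v` vanish on a nonempty open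
subset of `U`, then `u = v = 0` on `U`. -/
theorem unique_continuation_coupled_bilaplacian
    (U : Set (EuclideanSpace ℝ (Fin 3))) (hUopen : IsOpen U) (hUconn : IsConnected U)
    (u v : EuclideanSpace ℝ (Fin 3) → ℝ)
    (hu : ContDiffOn ℝ 4 u U) (hv : ContDiffOn ℝ 4 v U)
    (C : ℝ) (hC : 0 < C)
    (hbu : ∀ x ∈ U, |bilap u x| ≤ C * Real.sqrt (esum u x + esum v x))
    (hbv : ∀ x ∈ U, |bilap v x| ≤ C * Real.sqrt (esum u x + esum v x))
    (V : Set (EuclideanSpace ℝ (Fin 3))) (hVopen : IsOpen V) (hVne : V.Nonempty)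
    (hVU : V ⊆ U)
    (huV : ∀ x ∈ V, u x = 0) (hvV : ∀ x ∈ V, v x = 0) :
    ∀ x ∈ U, u x = 0 ∧ v x = 0 := by
  have hsystem : ∀ x ∈ U, ∀ b : Fin 2, ![u, v] b x = 0 := by
    refine unique_continuation_coupled_bilaplacian_general hUopen hUconn.isPreconnected
      (Fin.forall_fin_two.2 ⟨hu, hv⟩) (fun p hp => ⟨C, ?_⟩) hVopen hVne hVU
      (Fin.forall_fin_two.2 ⟨huV, hvV⟩)
    filter_upwards [hUopen.mem_nhds hp] with x hx
    simp only [Fin.sum_univ_two, ← BilaplacianCarleman.esum_eq_jetSq,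
      ← BilaplacianCarleman.bilap_eq_laplacian_laplacian]
    exact Fin.forall_fin_two.2 ⟨hbu x hx, hbv x hx⟩
  exact fun x hx => Fin.forall_fin_two.1 (hsystem x hx)
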